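/- arXiv:0812.2093 — 3 statements merged into one kernel-verified Lean document; each statement's English description precedes it below -/
import Mathlib

section
/- There exists a finitely generated torsion group G that is not unitarizable (hence contains no non-abelian free subgroup) and is weakly amenable: for every ε > 0 there exist a finite generating set X of G and a unit vector u in ℓ²(G) such that ‖λ(x)u − u‖ < ε for every x ∈ X, where λ denotes the left regular representation of G on ℓ²(G) given by (λ(x)u)(h) = u(x⁻¹h). -/
/-- A representation of a group `G` on a complex inner product space `E`
(a homomorphism into the group of invertible continuous linear operators on `E`)
is *uniformly bounded* if the operator norms `‖π g‖` are bounded. -/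
def UniformlyBoundedRep {G : Type*} [Group G] {E : Type*} [NormedAddCommGroup E]
    [InnerProductSpace ℂ E] (π : G →* (E ≃L[ℂ] E)) : Prop :=
  ∃ C : ℝ, ∀ g : G, ‖((π g : E ≃L[ℂ] E) : E →L[ℂ] E)‖ ≤ C

/-- A representation `π` is *unitarizable* if there is a continuous linear automorphism
`S` of `E` such that `g ↦ S⁻¹ π(g) S` is a unitary operator for every `g` (being an
invertible continuous linear map, it is unitary iff it is an isometry). -/
def IsUnitarizableRep {G : Type*} [Group G] {E : Type*} [NormedAddCommGroup E]
    [InnerProductSpace ℂ E] (π : G →* (E ≃L[ℂ] E)) : Prop :=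
  ∃ S : E ≃L[ℂ] E, ∀ g : G, ∀ v : E, ‖S.symm (π g (S v))‖ = ‖v‖

/-- A group `G` is *unitarizable* if every uniformly bounded representation of `G`
on every complex Hilbert space is unitarizable. -/
def Unitarizable (G : Type*) [Group G] : Prop :=
  ∀ (E : Type) [NormedAddCommGroup E] [InnerProductSpace ℂ E] [CompleteSpace E]
    (π : G →* (E ≃L[ℂ] E)), UniformlyBoundedRep π → IsUnitarizableRep π


/-- The left regular representation of `G` on `ℓ²(G)`: `(λ(x)u)(h) = u(x⁻¹ h)`. -/
noncomputable def leftRegular {G : Type*} [Group G] (x : G)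
    (u : lp (fun _ : G => ℂ) 2) : lp (fun _ : G => ℂ) 2 :=
  ⟨fun h => u (x⁻¹ * h), by
    have hu : Memℓp (⇑u) 2 := lp.memℓp u
    have hs : Summable fun i : G => ‖u i‖ ^ (2 : ENNReal).toReal :=
      (memℓp_gen_iff (by norm_num)).mp hu
    exact memℓp_gen (((Equiv.mulLeft x⁻¹).summable_iff
      (f := fun h : G => ‖u h‖ ^ (2 : ENNReal).toReal)).mpr hs)⟩

/-! ### Chains on the Cayley graph of a quotient of a free group -/

namespace FoxChain

open Finset

/-- Mod 2 edge chains on the Cayley graph of `Q` with respect to `i` generators. -/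
abbrev Chain (Q : Type) (i : ℕ) : Type := Q × Fin i → ZMod 2

lemma add_self_chain {Q : Type} {i : ℕ} (m : Chain Q i) : m + m = 0 :=
  funext fun _ => CharTwo.add_self_eq_zero _

section Shift

variable {Q : Type} [Group Q] {i : ℕ}

/-- Left translation of chains. -/
def shift (q : Q) : Chain Q i →ₗ[ZMod 2] Chain Q i where
  toFun m p := m (q⁻¹ * p.1, p.2)
  map_add' _ _ := rfl
  map_smul' _ _ := rfl

lemma shift_apply (q : Q) (m : Chain Q i) (p : Q × Fin i) :
    shift q m p = m (q⁻¹ * p.1, p.2) := rfl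

@[simp] lemma shift_one (m : Chain Q i) : shift 1 m = m := by
  funext p; simp [shift_apply]

lemma shift_shift (q r : Q) (m : Chain Q i) : shift q (shift r m) = shift (q * r) m := by
  funext p; simp [shift_apply, mul_assoc]

lemma shift_inv_shift (q : Q) (m : Chain Q i) : shift q⁻¹ (shift q m) = m := by
  simp [shift_shift]

lemma shift_shift_inv (q : Q) (m : Chain Q i) : shift q (shift q⁻¹ m) = m := by
  simp [shift_shift]

open Classical in
/-- The edge leaving `q` with label `n`, as a chain (zero if `n` is not among the labels). -/
noncomputable def edge (i : ℕ) (q : Q) (n : ℕ) : Chain Q i :=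
  fun p => if p.1 = q ∧ (p.2 : ℕ) = n then 1 else 0

open Classical in
lemma shift_edge (q r : Q) (n : ℕ) : shift q (edge i r n) = edge i (q * r) n := by
  funext p
  have h : q⁻¹ * p.1 = r ↔ p.1 = q * r := inv_mul_eq_iff_eq_mul
  exact if_congr (and_congr_left' h) rfl rfl

/-- A subspace of a coordinate space is determined by at most as many coordinates as its
dimension. -/
lemma exists_determining_coordinates {k ι : Type} [Field k] [Finite ι]
    (R : Submodule k (ι → k)) :
    ∃ B : Finset ι, #B ≤ Module.finrank k R ∧ ∀ m ∈ R, (∀ b ∈ B, m b = 0) → m = 0 := by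
  classical
  have := Fintype.ofFinite ι
  let ev : ι → Module.Dual k R := fun b => (LinearMap.proj b).comp R.subtype
  obtain ⟨s, hs, hspan, hli⟩ := exists_linearIndependent k (Set.range ev)
  have hfin : s.Finite := (Set.finite_range ev).subset hs
  have hex : ∀ x ∈ s, ∃ b, ev b = x := fun x hx => hs hx
  rcases isEmpty_or_nonempty ι with hι | hι
  · exact ⟨∅, by simp, fun m _ _ => Subsingleton.elim _ _⟩
  choose! g hg using hex
  refine ⟨hfin.toFinset.image g, ?_, ?_⟩
  · refine card_image_le.trans ?_
    have := hfin.fintype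
    have h1 := hli.fintype_card_le_finrank
    rw [Subspace.dual_finrank_eq] at h1
    rwa [Set.Finite.card_toFinset]
  · intro m hm h0
    have key : ∀ f ∈ Submodule.span k (Set.range ev), f ⟨m, hm⟩ = 0 := by
      rw [← hspan]
      intro f hf
      induction hf using Submodule.span_induction with
      | mem x hx =>
        rw [← hg x hx]
        exact h0 (g x) (mem_image_of_mem _ (by simpa using hx))
      | zero => rfl
      | add x y _ _ hx hy => simp [hx, hy]
      | smul a x _ hx => simp [hx]
    funext b
    exact key (ev b) (Submodule.subset_span ⟨b, rfl⟩)

/-- A finite set of labelled edges has at most twice as many elements as endpoints, if all its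
cycles lie in a translation invariant space of chains of small dimension. -/
lemma card_edges_le [Finite Q] {H : Type} [DecidableEq H] (R : Submodule (ZMod 2) (Chain Q i))
    (hshift : ∀ q, ∀ m ∈ R, shift q m ∈ R) (hdim : Module.finrank (ZMod 2) R ≤ Nat.card Q)
    (A : Finset (H × ℕ)) (V : Finset H) (t : H × ℕ → H) (p : H → Q) (τ : H → Chain Q i)
    (hV : ∀ a ∈ A, a.1 ∈ V) (htV : ∀ a ∈ A, t a ∈ V) (hp : Set.InjOn p V)
    (hi : ∀ a ∈ A, a.2 < i) (hτ : ∀ a ∈ A, edge i (p a.1) a.2 + τ a.1 + τ (t a) ∈ R) :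
    #A ≤ 2 * #V := by
  classical
  have := Fintype.ofFinite Q
  obtain ⟨B, hB, hdet⟩ := exists_determining_coordinates R
  let G : Q → Finset (H × ℕ) := fun g =>
    A.filter fun a => ∃ b ∈ B, b.1 = g * p a.1 ∧ (b.2 : ℕ) = a.2
  -- averaging over translations
  have havg : ∑ g : Q, #(G g) ≤ ∑ _g : Q, #V := by
    have h1 : ∑ g : Q, #(G g) = #((univ : Finset Q).sigma G) := (card_sigma _ _).symm
    have h2 : #((univ : Finset Q).sigma G) ≤ #(B ×ˢ V) := by
      refine card_le_card_of_forall_subsingleton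
        (fun x y => y.1.1 = x.1 * p x.2.1 ∧ (y.1.2 : ℕ) = x.2.2 ∧ y.2 = x.2.1) ?_ ?_
      · intro x hx
        obtain ⟨hxA, b, hb, h1, h2⟩ := mem_filter.1 (mem_sigma.1 hx).2
        exact ⟨(b, x.2.1), mem_product.2 ⟨hb, hV _ hxA⟩, h1, h2, rfl⟩
      · rintro ⟨b, v⟩ - ⟨g, h, n⟩ ⟨-, a1, b1, rfl⟩ ⟨g', h', n'⟩ ⟨-, a2, b2, c2⟩
        simp only at a1 a2 b1 b2 c2
        subst c2
        have hg : g = g' := by simpa using a1.symm.trans a2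
        have hn : n = n' := b1.symm.trans b2
        rw [hg, hn]
    rw [h1]
    refine h2.trans ?_
    rw [card_product, sum_const, smul_eq_mul, card_univ, ← Nat.card_eq_fintype_card]
    exact Nat.mul_le_mul_right _ (hB.trans hdim)
  obtain ⟨g, -, hg⟩ := exists_le_of_sum_le univ_nonempty havg
  -- the linear map recording the boundary and the special coordinates
  let ev : A → (A → ZMod 2) →ₗ[ZMod 2] ZMod 2 := fun a => LinearMap.proj a
  let bd : (A → ZMod 2) →ₗ[ZMod 2] (V → ZMod 2) :=
    LinearMap.pi fun v => ∑ a : A, ((if a.1.1 = v.1 then 1 else 0 : ZMod 2)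
      + (if t a.1 = v.1 then 1 else 0)) • ev a
  let rs : (A → ZMod 2) →ₗ[ZMod 2] (G g → ZMod 2) :=
    LinearMap.pi fun a => ev ⟨a.1, (mem_filter.1 a.2).1⟩
  have hinj : Function.Injective (bd.prod rs) := by
    rw [injective_iff_map_eq_zero]
    intro x hx
    have hbd : ∀ v : V, ∑ a : A, ((if a.1.1 = v.1 then 1 else 0 : ZMod 2)
      + (if t a.1 = v.1 then 1 else 0)) * x a = 0 := by
      intro v
      have := congrFun (congrArg Prod.fst hx) v
      simpa [bd, ev] using this
    have hrs : ∀ a : A, a.1 ∈ G g → x a = 0 := by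
      intro a ha
      exact congrFun (congrArg Prod.snd hx) ⟨a.1, ha⟩
    let y : Chain Q i := ∑ a : A, x a • edge i (p a.1.1) a.1.2
    have hy0 : ∑ a : A, x a • (τ a.1.1 + τ (t a.1)) = 0 := by
      have h1 : ∀ a : A, τ a.1.1 + τ (t a.1) = ∑ v : V, ((if a.1.1 = v.1 then 1 else 0 : ZMod 2)
          + (if t a.1 = v.1 then 1 else 0)) • τ v := by
        intro a
        simp only [add_smul, sum_add_distrib, ite_smul, one_smul, zero_smul]
        congr 1
        · rw [sum_eq_single ⟨a.1.1, hV _ a.2⟩] <;> simp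
          intro b hb h1 h2; exact absurd h2.symm h1
        · rw [sum_eq_single ⟨t a.1, htV _ a.2⟩] <;> simp
          intro b hb h1 h2; exact absurd h2.symm h1
      simp_rw [h1, smul_sum]
      rw [sum_comm]
      refine sum_eq_zero fun v _ => ?_
      simp_rw [smul_smul]
      rw [← sum_smul]
      have := hbd v
      simp_rw [mul_comm _ (x _)] at this
      rw [this, zero_smul]
    have hyR : y ∈ R := by
      have : y = ∑ a : A, x a • (edge i (p a.1.1) a.1.2 + τ a.1.1 + τ (t a.1)) := by
        have h2 : ∀ a : A, x a • (edge i (p a.1.1) a.1.2 + τ a.1.1 + τ (t a.1))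
            = x a • edge i (p a.1.1) a.1.2 + x a • (τ a.1.1 + τ (t a.1)) := by
          intro a; rw [add_assoc, smul_add]
        rw [sum_congr rfl fun a _ => h2 a, sum_add_distrib, hy0, add_zero]
      rw [this]
      exact R.sum_mem fun a _ => R.smul_mem _ (hτ _ a.2)
    have hgy : shift g y = 0 := by
      refine hdet _ (hshift g y hyR) fun b hb => ?_
      simp only [y, map_sum, map_smul, shift_edge, Finset.sum_apply, Pi.smul_apply, smul_eq_mul]
      refine sum_eq_zero fun a _ => ?_
      by_cases hab : b.1 = g * p a.1.1 ∧ (b.2 : ℕ) = a.1.2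
      · rw [hrs a (mem_filter.2 ⟨a.2, b, hb, hab⟩), zero_mul]
      · simp only [edge, if_neg hab, mul_zero]
    have hy : y = 0 := by
      have := congrArg (shift g⁻¹) hgy
      rwa [shift_inv_shift, map_zero] at this
    funext a
    have h3 := congrFun hy (p a.1.1, ⟨a.1.2, hi _ a.2⟩)
    simp only [y, Finset.sum_apply, Pi.smul_apply, smul_eq_mul, Pi.zero_apply, edge] at h3
    rw [sum_eq_single a] at h3
    · simpa using h3
    · intro b _ hba
      rw [if_neg, mul_zero]
      rintro ⟨e1, e2⟩
      exact hba (Subtype.ext (Prod.ext (hp (hV _ b.2) (hV _ a.2) e1.symm) e2.symm))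
    · simp
  have hle := LinearMap.finrank_le_finrank_of_injective hinj
  simp only [Module.finrank_prod, Module.finrank_fintype_fun_eq_card, Fintype.card_coe] at hle
  omega

end Shift

section Fox

variable {Q : Type} [Group Q] {i : ℕ}

/-- The affine permutation of the chains with linear part `q` and translation part `a`. -/
def affinePerm (q : Q) (a : Chain Q i) : Equiv.Perm (Chain Q i) where
  toFun m := shift q m + a
  invFun m := shift q⁻¹ (m + a)
  left_inv m := by
    beta_reduce
    rw [add_assoc, add_self_chain, add_zero, shift_inv_shift]
  right_inv m := by
    beta_reduce
    rw [shift_shift_inv, add_assoc, add_self_chain, add_zero]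

variable (φ : FreeGroup ℕ →* Q) (i)

/-- The affine action of the free group on chains given by the mod 2 Fox calculus. -/
noncomputable def affine : FreeGroup ℕ →* Equiv.Perm (Chain Q i) :=
  FreeGroup.lift fun n => affinePerm (φ (FreeGroup.of n)) (edge i 1 n)

/-- The mod 2 Fox derivation: the chain of the path from `1` spelled by a word. -/
noncomputable def fox (v : FreeGroup ℕ) : Chain Q i := affine i φ v 0

lemma affine_apply (v : FreeGroup ℕ) (m : Chain Q i) :
    affine i φ v m = shift (φ v) m + fox i φ v := by
  induction v using FreeGroup.induction_on generalizing m with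
  | C1 => simp [fox]
  | of n => simp [fox, affine, affinePerm]
  | inv_of n _ =>
    have h : ∀ m, affine i φ (FreeGroup.of n)⁻¹ m =
        shift (φ (FreeGroup.of n))⁻¹ (m + edge i 1 n) := by
      intro m
      rw [map_inv, Equiv.Perm.inv_def]
      simp [affine, affinePerm]
    rw [fox, h, h, zero_add, map_add, map_inv]
  | mul v w hv hw =>
    rw [fox, map_mul, Equiv.Perm.mul_apply, Equiv.Perm.mul_apply, hw, hv, hw 0, hv, map_mul]
    simp only [map_add, map_zero, zero_add, shift_shift, add_assoc]

lemma fox_mul (v w : FreeGroup ℕ) : fox i φ (v * w) = shift (φ v) (fox i φ w) + fox i φ v := by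
  rw [fox, map_mul, Equiv.Perm.mul_apply, ← fox, affine_apply]

lemma fox_one : fox i φ 1 = 0 := by simp [fox]

lemma fox_of (n : ℕ) : fox i φ (FreeGroup.of n) = edge i 1 n := by
  simp [fox, affine, affinePerm]

lemma fox_inv (v : FreeGroup ℕ) : fox i φ v⁻¹ = shift (φ v)⁻¹ (fox i φ v) := by
  have h := fox_mul i φ v⁻¹ v
  rw [inv_mul_cancel, fox_one, map_inv] at h
  have := congrArg (shift (φ v)⁻¹ (fox i φ v) + ·) h
  simp only [add_zero, ← add_assoc, add_self_chain, zero_add] at this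
  exact this.symm

/-- The invariant space of chains spanned by the relators. -/
def relSpan (r : ℕ → FreeGroup ℕ) : Submodule (ZMod 2) (Chain Q i) :=
  Submodule.span (ZMod 2) {m | ∃ q j, m = shift q (fox i φ (r j))}

lemma shift_mem_relSpan (r : ℕ → FreeGroup ℕ) (q : Q) (m : Chain Q i) (hm : m ∈ relSpan i φ r) :
    shift q m ∈ relSpan i φ r := by
  induction hm using Submodule.span_induction with
  | mem x hx =>
    obtain ⟨q', j, rfl⟩ := hx
    exact Submodule.subset_span ⟨q * q', j, shift_shift _ _ _⟩
  | zero => rw [map_zero]; exact Submodule.zero_mem _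
  | add x y _ _ hx hy => rw [map_add]; exact Submodule.add_mem _ hx hy
  | smul a x _ hx => rw [map_smul]; exact Submodule.smul_mem _ _ hx

lemma fox_mem_relSpan (r : ℕ → FreeGroup ℕ) (j : ℕ) : fox i φ (r j) ∈ relSpan i φ r :=
  Submodule.subset_span ⟨1, j, (shift_one _).symm⟩

lemma shift_fox_pow (v : FreeGroup ℕ) (n : ℕ) (h : φ v ^ n = 1) :
    shift (φ v) (fox i φ (v ^ n)) = fox i φ (v ^ n) := by
  have h1 := fox_mul i φ v (v ^ n)
  rw [← pow_succ', pow_succ, fox_mul, map_pow, h, shift_one, add_comm] at h1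
  exact (add_right_cancel h1).symm

lemma sum_div_two_pow_le (m n : ℕ) : ∑ j ∈ range n, m / 2 ^ (j + 1) ≤ m := by
  suffices h : ∑ j ∈ range n, m / 2 ^ (j + 1) + m / 2 ^ n ≤ m from
    (Nat.le_add_right _ _).trans h
  induction n with
  | zero => simp
  | succ n ih =>
    rw [sum_range_succ]
    have : m / 2 ^ (n + 1) = m / 2 ^ n / 2 := by rw [pow_succ, Nat.div_div_eq_div_mul]
    omega

lemma finrank_relSpan_le [Finite Q] (w : ℕ → FreeGroup ℕ)
    (hw : ∀ j, φ (w j) ^ 2 ^ (j + 1) = 1) :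
    Module.finrank (ZMod 2) (relSpan i φ fun j => w j ^ 2 ^ (j + 1)) ≤ Nat.card Q := by
  classical
  have := Fintype.ofFinite Q
  let c : ℕ → Chain Q i := fun j => fox i φ (w j ^ 2 ^ (j + 1))
  have hc : ∀ j, c j = 0 ∨ φ (w j) ^ 2 ^ j ≠ 1 := by
    intro j
    by_cases h : φ (w j) ^ 2 ^ j = 1
    · left
      simp only [c]
      rw [pow_succ, mul_comm, two_mul, pow_add, fox_mul, map_pow, h, shift_one, add_self_chain]
    · exact Or.inr h
  let X : ℕ → Finset (Chain Q i) := fun j =>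
    if c j = 0 then ∅ else univ.image fun q => shift q (c j)
  have hX : ∀ j, 2 ^ (j + 1) * #(X j) ≤ Nat.card Q := by
    intro j
    by_cases hj : c j = 0
    · simp [X, hj]
    simp only [X, if_neg hj]
    rw [Nat.card_eq_fintype_card, ← card_univ]
    have hord : orderOf (φ (w j)) = 2 ^ (j + 1) :=
      orderOf_eq_prime_pow ((hc j).resolve_left hj) (hw j)
    have hstab : ∀ k : ℕ, shift (φ (w j) ^ k) (c j) = c j := by
      intro k
      induction k with
      | zero => simp
      | succ k ih => rw [pow_succ, ← shift_shift, shift_fox_pow i φ (w j) _ (hw j), ih]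
    refine mul_card_image_le_card _ _ fun m hm => ?_
    obtain ⟨q, -, rfl⟩ := mem_image.1 hm
    rw [← hord, ← card_range (orderOf (φ (w j)))]
    refine card_le_card_of_injOn (fun k => q * φ (w j) ^ k) ?_ ?_
    · intro k _
      simp [← shift_shift, hstab]
    · intro k hk l hl hkl
      exact pow_injOn_Iio_orderOf (by simpa using hk) (by simpa using hl) (mul_left_cancel hkl)
  have hle : ∀ j, #(X j) ≤ Nat.card Q / 2 ^ (j + 1) := fun j =>
    (Nat.le_div_iff_mul_le (by positivity)).2 (by rw [mul_comm]; exact hX j)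
  let T := (range (Nat.card Q)).biUnion X
  have hT : #T ≤ Nat.card Q :=
    card_biUnion_le.trans ((sum_le_sum fun j _ => hle j).trans (sum_div_two_pow_le _ _))
  have hspan : relSpan i φ (fun j => w j ^ 2 ^ (j + 1)) ≤
      Submodule.span (ZMod 2) (T : Set (Chain Q i)) := by
    refine Submodule.span_le.2 ?_
    rintro _ ⟨q, j, rfl⟩
    by_cases hj : c j = 0
    · have : shift q (c j) = 0 := by rw [hj, map_zero]
      simp only [c] at this
      rw [this]
      exact Submodule.zero_mem _
    · have hmem : shift q (c j) ∈ X j := by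
        simp only [X, if_neg hj]
        exact mem_image_of_mem _ (mem_univ q)
      refine Submodule.subset_span (mem_coe.2 (mem_biUnion.2 ⟨j, mem_range.2 ?_, hmem⟩))
      have h1 : 0 < #(X j) := card_pos.2 ⟨_, hmem⟩
      have h2 := hX j
      have h3 : j < 2 ^ (j + 1) := (Nat.lt_succ_self j).trans Nat.lt_two_pow_self
      nlinarith
  exact (Submodule.finrank_mono hspan).trans ((finrank_span_finset_le_card T).trans hT)

end Fox

section Tower

/-- The subgroup of `N` of elements whose chain lies in the span of the relators. -/
def descend (r : ℕ → FreeGroup ℕ) (i : ℕ) (N : Subgroup (FreeGroup ℕ)) [N.Normal] :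
    Subgroup (FreeGroup ℕ) where
  carrier := {v | v ∈ N ∧ fox i (QuotientGroup.mk' N) v ∈ relSpan i (QuotientGroup.mk' N) r}
  one_mem' := ⟨N.one_mem, by rw [fox_one]; exact Submodule.zero_mem _⟩
  mul_mem' := fun {v w} hv hw => ⟨N.mul_mem hv.1 hw.1, by
    rw [fox_mul]
    exact Submodule.add_mem _ (shift_mem_relSpan _ _ _ _ _ hw.2) hv.2⟩
  inv_mem' := fun {v} hv => ⟨N.inv_mem hv.1, by
    rw [fox_inv]
    exact shift_mem_relSpan _ _ _ _ _ hv.2⟩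

variable (r : ℕ → FreeGroup ℕ) (i : ℕ) (N : Subgroup (FreeGroup ℕ)) [N.Normal]

lemma descend_le : descend r i N ≤ N := fun _ h => h.1

instance descend_normal : (descend r i N).Normal := by
  refine ⟨fun v hv g => ⟨Subgroup.Normal.conj_mem inferInstance v hv.1 g, ?_⟩⟩
  have h1 : QuotientGroup.mk' N v = 1 := (QuotientGroup.eq_one_iff v).2 hv.1
  rw [fox_mul, fox_mul, fox_inv, map_mul, h1, mul_one, shift_shift_inv,
    add_left_comm, add_self_chain, add_zero]
  exact shift_mem_relSpan _ _ _ _ _ hv.2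

lemma descend_finiteIndex [N.FiniteIndex] : (descend r i N).FiniteIndex := by
  have : Finite (FreeGroup ℕ ⧸ N) := inferInstance
  let ψ := (QuotientGroup.mk' N).prod (affine i (QuotientGroup.mk' N))
  have hle : ψ.ker ≤ descend r i N := by
    intro v hv
    have h : QuotientGroup.mk' N v = 1 ∧ affine i (QuotientGroup.mk' N) v = 1 := by
      simpa only [ψ, MonoidHom.mem_ker, MonoidHom.prod_apply, Prod.mk_eq_one] using hv
    refine ⟨(QuotientGroup.eq_one_iff v).1 h.1, ?_⟩
    rw [fox, h.2]
    exact Submodule.zero_mem _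
  exact Subgroup.finiteIndex_of_le hle

/-- The descending tower of finite index subgroups. -/
def tower : ℕ → {N : Subgroup (FreeGroup ℕ) // N.Normal}
  | 0 => ⟨⊤, inferInstance⟩
  | i + 1 => haveI := (tower i).2; ⟨descend r i (tower i).1, descend_normal r i _⟩

instance tower_normal : (tower r i).1.Normal := (tower r i).2

lemma tower_antitone : Antitone fun i => (tower r i).1 :=
  antitone_nat_of_succ_le fun i => descend_le r i _

lemma tower_finiteIndex : (tower r i).1.FiniteIndex := by
  induction i with
  | zero => exact inferInstanceAs (⊤ : Subgroup (FreeGroup ℕ)).FiniteIndex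
  | succ i ih => exact descend_finiteIndex r i _

lemma relator_mem_tower (j : ℕ) : r j ∈ (tower r i).1 := by
  induction i with
  | zero => exact Subgroup.mem_top _
  | succ i ih => exact ⟨ih, fox_mem_relSpan _ _ _ _⟩

end Tower

/-- There is a torsion group with a sequence of elements such that the edges of the associated
Cayley graph can be assigned to their endpoints, each vertex being used at most twice. -/
theorem exists_torsion_orientable :
    ∃ (H : Type) (_ : Group H) (s : ℕ → H) (o : H × ℕ → H × Fin 2),
      IsMulTorsion H ∧ Function.Injective o ∧
        ∀ x n, (o (x, n)).1 = x ∨ (o (x, n)).1 = x * s n := by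
  classical
  obtain ⟨w, hw⟩ := exists_surjective_nat (FreeGroup ℕ)
  let r : ℕ → FreeGroup ℕ := fun j => w j ^ 2 ^ (j + 1)
  let K : Subgroup (FreeGroup ℕ) := ⨅ i, (tower r i).1
  have hK : K.Normal := Subgroup.normal_iInf_normal fun i => (tower r i).2
  have hKle : ∀ i, K ≤ (tower r i).1 := fun i => iInf_le _ i
  let s : ℕ → FreeGroup ℕ ⧸ K := fun n => QuotientGroup.mk (FreeGroup.of n)
  let t : (FreeGroup ℕ ⧸ K) × ℕ → FreeGroup ℕ ⧸ K := fun a => a.1 * s a.2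
  have hcard : ∀ (A : Finset ((FreeGroup ℕ ⧸ K) × ℕ)),
      #A ≤ 2 * #(A.image Prod.fst ∪ A.image t) := by
    intro A
    set V := A.image Prod.fst ∪ A.image t with hVdef
    have hsep : ∀ᶠ i in Filter.atTop, ∀ h ∈ V, ∀ h' ∈ V, h ≠ h' →
        h.out⁻¹ * h'.out ∉ (tower r i).1 := by
      rw [Filter.eventually_all_finset]
      intro h _
      rw [Filter.eventually_all_finset]
      intro h' _
      by_cases hne : h = h'
      · exact Filter.Eventually.of_forall fun i hi => absurd hne hi
      have : h.out⁻¹ * h'.out ∉ K := by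
        rw [← QuotientGroup.eq, QuotientGroup.out_eq', QuotientGroup.out_eq']
        exact hne
      rw [Subgroup.mem_iInf, not_forall] at this
      obtain ⟨i, hi⟩ := this
      filter_upwards [Filter.eventually_ge_atTop i] with j hj _ hmem
      exact hi (tower_antitone r hj hmem)
    have hlab : ∀ᶠ i in Filter.atTop, ∀ a ∈ A, a.2 < i := by
      rw [Filter.eventually_all_finset]
      exact fun a _ => Filter.eventually_gt_atTop a.2
    obtain ⟨i, hi1, hi2⟩ := (hsep.and hlab).exists
    have := tower_finiteIndex r i
    let φ := QuotientGroup.mk' (tower r i).1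
    refine card_edges_le (relSpan i φ r) (shift_mem_relSpan i φ r)
      (finrank_relSpan_le i φ w fun j => ?_) A V t (fun h => φ h.out) (fun h => fox i φ h.out)
      ?_ ?_ ?_ hi2 ?_
    · rw [← map_pow]
      exact (QuotientGroup.eq_one_iff _).2 (relator_mem_tower r i j)
    · intro a ha
      exact mem_union_left _ (mem_image_of_mem _ ha)
    · intro a ha
      exact mem_union_right _ (mem_image_of_mem _ ha)
    · intro h hh h' hh' heq
      by_contra hne
      exact hi1 h hh h' hh' hne (QuotientGroup.eq.1 heq)
    · intro a _
      have hmem : a.1.out * FreeGroup.of a.2 * ((t a).out)⁻¹ ∈ K := by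
        rw [← QuotientGroup.eq_one_iff, QuotientGroup.mk_mul, QuotientGroup.mk_mul,
          QuotientGroup.mk_inv, QuotientGroup.out_eq', QuotientGroup.out_eq', mul_inv_eq_one]
      have h2 := (hKle (i + 1) hmem).2
      have h3 : φ (a.1.out * FreeGroup.of a.2) = φ (t a).out := by
        rw [← mul_inv_eq_one, ← map_inv, ← map_mul]
        exact (QuotientGroup.eq_one_iff _).2 (hKle i hmem)
      change fox i φ _ ∈ relSpan i φ r at h2
      rw [fox_mul, fox_inv, h3, shift_shift_inv, fox_mul, fox_of, shift_edge, mul_one] at h2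
      rwa [add_comm] at h2
  have hall := (all_card_le_biUnion_card_iff_exists_injective
    (fun a : (FreeGroup ℕ ⧸ K) × ℕ => ({a.1, t a} : Finset _) ×ˢ (univ : Finset (Fin 2)))).1 (by
      intro A
      refine (hcard A).trans ?_
      have : 2 * #(A.image Prod.fst ∪ A.image t) =
          #((A.image Prod.fst ∪ A.image t) ×ˢ (univ : Finset (Fin 2))) := by
        rw [card_product, card_univ, Fintype.card_fin, mul_comm]
      rw [this]
      refine card_le_card fun x hx => ?_
      obtain ⟨hx1, hx2⟩ := mem_product.1 hx
      rcases mem_union.1 hx1 with h | h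
      · obtain ⟨a, ha, hax⟩ := mem_image.1 h
        exact mem_biUnion.2 ⟨a, ha, mem_product.2 ⟨by simp [hax], hx2⟩⟩
      · obtain ⟨a, ha, hax⟩ := mem_image.1 h
        exact mem_biUnion.2 ⟨a, ha, mem_product.2 ⟨by simp [hax], hx2⟩⟩)
  obtain ⟨o, ho, hmem⟩ := hall
  refine ⟨FreeGroup ℕ ⧸ K, inferInstance, s, o, ?_, ho, fun x n => ?_⟩
  · intro h
    induction h using QuotientGroup.induction_on with
    | H v =>
      obtain ⟨j, rfl⟩ := hw v
      refine isOfFinOrder_iff_pow_eq_one.2 ⟨2 ^ (j + 1), by positivity, ?_⟩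
      rw [← QuotientGroup.mk_pow]
      exact (QuotientGroup.eq_one_iff _).2
        (Subgroup.mem_iInf.2 fun i => relator_mem_tower r i j)
  · simpa [t] using (mem_product.1 (hmem (x, n))).1

end FoxChain

/-! ### Groups with a bounded orientation of a Cayley graph are not unitarizable -/

namespace OrientedCayley

open Finset

variable {G : Type} [Group G]

lemma leftRegular_apply (g : G) (u : lp (fun _ : G => ℂ) 2) (x : G) :
    leftRegular g u x = u (g⁻¹ * x) := rfl

lemma norm_leftRegular (g : G) (u : lp (fun _ : G => ℂ) 2) : ‖leftRegular g u‖ = ‖u‖ := by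
  have hp : 0 < (2 : ENNReal).toReal := by norm_num
  rw [lp.norm_eq_tsum_rpow hp, lp.norm_eq_tsum_rpow hp]
  congr 1
  exact (Equiv.mulLeft g⁻¹).tsum_eq fun h => ‖u h‖ ^ (2 : ENNReal).toReal

/-- The left regular representation as a continuous linear map. -/
noncomputable def regularCLM (g : G) : lp (fun _ : G => ℂ) 2 →L[ℂ] lp (fun _ : G => ℂ) 2 :=
  LinearMap.mkContinuous
    { toFun := leftRegular g
      map_add' := fun _ _ => rfl
      map_smul' := fun _ _ => rfl } 1 fun u => by
    rw [one_mul]; exact (norm_leftRegular g u).le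

lemma regularCLM_apply (g : G) (u : lp (fun _ : G => ℂ) 2) (x : G) :
    regularCLM g u x = u (g⁻¹ * x) := rfl

lemma norm_regularCLM_apply (g : G) (u : lp (fun _ : G => ℂ) 2) : ‖regularCLM g u‖ = ‖u‖ :=
  norm_leftRegular g u

section Schur

variable {G : Type} [DecidableEq G] {C : ℕ} {ρ : G → Finset G}

lemma sum_norm_sum_sq_le (hrow : ∀ x, #(ρ x) ≤ C)
    (hcol : ∀ (y : G) (F : Finset G), #{x ∈ F | y ∈ ρ x} ≤ C)
    (u : lp (fun _ : G => ℂ) 2) (F : Finset G) :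
    ∑ x ∈ F, ‖∑ y ∈ ρ x, u y‖ ^ (2 : ENNReal).toReal ≤ (C * ‖u‖) ^ (2 : ENNReal).toReal := by
  have h2 : (2 : ENNReal).toReal = ((2 : ℕ) : ℝ) := by norm_num
  have hu := lp.sum_rpow_le_norm_rpow (p := 2) (by norm_num) u (F.biUnion ρ)
  simp only [h2, Real.rpow_natCast] at hu ⊢
  calc ∑ x ∈ F, ‖∑ y ∈ ρ x, u y‖ ^ 2
      ≤ ∑ x ∈ F, C * ∑ y ∈ ρ x, ‖u y‖ ^ 2 := by
        refine sum_le_sum fun x _ => ?_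
        calc ‖∑ y ∈ ρ x, u y‖ ^ 2 ≤ (∑ y ∈ ρ x, ‖u y‖) ^ 2 := by
              gcongr; exact norm_sum_le _ _
          _ ≤ #(ρ x) * ∑ y ∈ ρ x, ‖u y‖ ^ 2 := sq_sum_le_card_mul_sum_sq
          _ ≤ C * ∑ y ∈ ρ x, ‖u y‖ ^ 2 := by
              gcongr; exact hrow x
    _ = C * ∑ x ∈ F, ∑ y ∈ ρ x, ‖u y‖ ^ 2 := by rw [mul_sum]
    _ = C * ∑ y ∈ F.biUnion ρ, ∑ x ∈ F with y ∈ ρ x, ‖u y‖ ^ 2 := by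
        congr 1
        refine sum_comm' fun x y => ?_
        simp only [mem_filter, mem_biUnion]
        constructor
        · rintro ⟨h1, h2⟩; exact ⟨⟨h1, h2⟩, x, h1, h2⟩
        · rintro ⟨h1, -⟩; exact h1
    _ ≤ C * ∑ y ∈ F.biUnion ρ, C * ‖u y‖ ^ 2 := by
        gcongr with y _
        rw [sum_const, nsmul_eq_mul]
        gcongr
        exact hcol y F
    _ = C * C * ∑ y ∈ F.biUnion ρ, ‖u y‖ ^ 2 := by rw [← mul_sum, mul_assoc]
    _ ≤ C * C * ‖u‖ ^ 2 := by gcongr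
    _ = (C * ‖u‖) ^ 2 := by ring

/-- The operator on `ℓ²(G)` whose matrix is the indicator of a relation with at most `C`
entries in each row and in each column. -/
noncomputable def schurCLM (ρ : G → Finset G) (C : ℕ) (hrow : ∀ x, #(ρ x) ≤ C)
    (hcol : ∀ (y : G) (F : Finset G), #{x ∈ F | y ∈ ρ x} ≤ C) :
    lp (fun _ : G => ℂ) 2 →L[ℂ] lp (fun _ : G => ℂ) 2 :=
  LinearMap.mkContinuous
    { toFun := fun u => ⟨fun x => ∑ y ∈ ρ x, u y,
        memℓp_gen' fun F => sum_norm_sum_sq_le hrow hcol u F⟩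
      map_add' := fun u v => by
        ext x
        exact sum_add_distrib
      map_smul' := fun a u => by
        ext x
        exact (mul_sum _ _ _).symm } C fun u =>
    lp.norm_le_of_forall_sum_le (by norm_num) (by positivity)
      fun F => sum_norm_sum_sq_le hrow hcol u F

lemma norm_schurCLM_le (hrow : ∀ x, #(ρ x) ≤ C)
    (hcol : ∀ (y : G) (F : Finset G), #{x ∈ F | y ∈ ρ x} ≤ C) :
    ‖schurCLM ρ C hrow hcol‖ ≤ C :=
  LinearMap.mkContinuous_norm_le _ (by positivity) _

end Schur

section Orientation

variable {s : ℕ → G} {C : ℕ} {o : G × ℕ → G × Fin C}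

/-- The relation `x → y` if some edge from `x` to `y` is assigned to its source. -/
def Points (s : ℕ → G) (o : G × ℕ → G × Fin C) (x y : G) : Prop :=
  ∃ n, y = x * s n ∧ (o (x, n)).1 = x

lemma finite_assigned {G : Type} {C : ℕ} {o : G × ℕ → G × Fin C} (ho : Function.Injective o)
    (x : G) (S : Set (G × ℕ))
    (hS : ∀ e ∈ S, (o e).1 = x) : S.Finite ∧ S.ncard ≤ C := by
  have hinj : Set.InjOn (fun e => (o e).2) S := fun e he e' he' h =>
    ho (Prod.ext ((hS e he).trans (hS e' he').symm) h)
  have hfin : S.Finite := Set.Finite.of_finite_image (Set.toFinite _) hinj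
  refine ⟨hfin, ?_⟩
  rw [← hinj.ncard_image]
  refine (Set.ncard_le_ncard (Set.subset_univ _)).trans ?_
  rw [Set.ncard_univ, Nat.card_eq_fintype_card, Fintype.card_fin]

lemma finite_setOf_points (ho : Function.Injective o) (x : G) :
    {y | Points s o x y}.Finite ∧ {y | Points s o x y}.ncard ≤ C := by
  obtain ⟨h1, h2⟩ := finite_assigned ho x {e | e.1 = x ∧ (o e).1 = x} fun e he => he.2
  have himg : {y | Points s o x y} ⊆ (fun e : G × ℕ => e.1 * s e.2) ''
      {e | e.1 = x ∧ (o e).1 = x} := by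
    rintro y ⟨n, rfl, hn⟩
    exact ⟨(x, n), ⟨rfl, hn⟩, rfl⟩
  exact ⟨(h1.image _).subset himg,
    (Set.ncard_le_ncard himg (h1.image _)).trans ((Set.ncard_image_le h1).trans h2)⟩

open Classical in
/-- The finite set of targets of edges assigned to their source `x`. -/
noncomputable def row (s : ℕ → G) (o : G × ℕ → G × Fin C) (x : G) : Finset G :=
  if h : {y | Points s o x y}.Finite then h.toFinset else ∅

lemma mem_row (ho : Function.Injective o) {x y : G} : y ∈ row s o x ↔ Points s o x y := by
  rw [row, dif_pos (finite_setOf_points ho x).1]; simp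

lemma card_row_le (ho : Function.Injective o) (x : G) : #(row s o x) ≤ C := by
  rw [row, dif_pos (finite_setOf_points ho x).1, 
    ← Set.ncard_eq_toFinset_card _ (finite_setOf_points ho x).1]
  exact (finite_setOf_points ho x).2

lemma card_reverse_le {G : Type} {C : ℕ} {o : G × ℕ → G × Fin C} (ho : Function.Injective o)
    (y : G) (z : G → G) (hz : Function.Injective z)
    (F : Finset G) (hF : ∀ x ∈ F, ∃ n, (o (z x, n)).1 = y) : #F ≤ C := by
  choose! n hn using hF
  obtain ⟨h1, h2⟩ := finite_assigned ho y ((fun x => (z x, n x)) '' F) (by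
    rintro _ ⟨x, hx, rfl⟩; exact hn x hx)
  have hinj : Set.InjOn (fun x => (z x, n x)) (F : Set G) :=
    fun x _ x' _ h => hz (Prod.ext_iff.1 h).1
  rwa [hinj.ncard_image, Set.ncard_coe_finset] at h2

lemma assigned_target (hmem : ∀ x n, (o (x, n)).1 = x ∨ (o (x, n)).1 = x * s n) {x y : G} {n : ℕ}
    (hy : y = x * s n) (hnot : ¬ Points s o x y) : (o (x, n)).1 = y := by
  rcases hmem x n with h | h
  · exact absurd ⟨n, hy, h⟩ hnot
  · rw [h, hy]

open Classical in
/-- The commutator of the infinite matrix `Points` with the regular representation. -/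
noncomputable def commCLM (ho : Function.Injective o)
    (hmem : ∀ x n, (o (x, n)).1 = x ∨ (o (x, n)).1 = x * s n) (g : G) :
    lp (fun _ : G => ℂ) 2 →L[ℂ] lp (fun _ : G => ℂ) 2 :=
  schurCLM (fun x => (row s o x).image (g⁻¹ * ·) \ row s o (g⁻¹ * x)) C
      (fun x => (card_le_card sdiff_subset).trans (card_image_le.trans (card_row_le ho x)))
      (fun y F => by
        refine card_reverse_le ho y (g⁻¹ * ·) (mul_right_injective _) _ fun x hx => ?_
        obtain ⟨-, hx2⟩ := mem_filter.1 hx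
        obtain ⟨h1, h2⟩ := mem_sdiff.1 hx2
        obtain ⟨y', hy', rfl⟩ := mem_image.1 h1
        obtain ⟨n, rfl, -⟩ := (mem_row ho).1 hy'
        exact ⟨n, assigned_target hmem (mul_assoc _ _ _).symm (mt (mem_row ho).2 h2)⟩) -
    schurCLM (fun x => row s o (g⁻¹ * x) \ (row s o x).image (g⁻¹ * ·)) C
      (fun x => (card_le_card sdiff_subset).trans (card_row_le ho _))
      (fun y F => by
        refine card_reverse_le ho (g * y) id Function.injective_id _ fun x hx => ?_
        obtain ⟨-, hx2⟩ := mem_filter.1 hx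
        obtain ⟨h1, h2⟩ := mem_sdiff.1 hx2
        obtain ⟨n, hn, -⟩ := (mem_row ho).1 h1
        refine ⟨n, assigned_target hmem (by rw [hn]; simp [mul_assoc]) fun hp => h2 ?_⟩
        exact mem_image.2 ⟨g * y, (mem_row ho).2 hp, by simp⟩)

variable (ho : Function.Injective o) (hmem : ∀ x n, (o (x, n)).1 = x ∨ (o (x, n)).1 = x * s n)

lemma commCLM_apply (g : G) (u : lp (fun _ : G => ℂ) 2) (x : G) :
    commCLM ho hmem g u x = ∑ y ∈ row s o x, u (g⁻¹ * y) - ∑ y ∈ row s o (g⁻¹ * x), u y := by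
  classical
  have h1 : ∑ y ∈ row s o x, u (g⁻¹ * y) = ∑ y ∈ (row s o x).image (g⁻¹ * ·), u y :=
    (sum_image fun _ _ _ _ h => mul_left_cancel h).symm
  rw [h1, ← sum_sdiff_sub_sum_sdiff]
  rfl

lemma norm_commCLM_le (g : G) : ‖commCLM ho hmem g‖ ≤ C + C := by
  classical
  rw [commCLM]
  exact (norm_sub_le _ _).trans (add_le_add (norm_schurCLM_le _ _) (norm_schurCLM_le _ _))

lemma commCLM_mul (g h : G) (u : lp (fun _ : G => ℂ) 2) :
    commCLM ho hmem (g * h) u =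
      commCLM ho hmem g (regularCLM h u) + regularCLM g (commCLM ho hmem h u) := by
  ext x
  simp only [lp.coeFn_add, Pi.add_apply, commCLM_apply, regularCLM_apply, mul_inv_rev, mul_assoc]
  ring

/-- The triangular representation twisted by the derivation `commCLM`. -/
noncomputable def twistedCLM (g : G) :
    (lp (fun _ : G => ℂ) 2 × lp (fun _ : G => ℂ) 2) →L[ℂ]
      (lp (fun _ : G => ℂ) 2 × lp (fun _ : G => ℂ) 2) :=
  ((regularCLM g).comp (ContinuousLinearMap.fst ℂ _ _) +
    (commCLM ho hmem g).comp (ContinuousLinearMap.snd ℂ _ _)).prod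
    ((regularCLM g).comp (ContinuousLinearMap.snd ℂ _ _))

lemma twistedCLM_apply (g : G) (z : lp (fun _ : G => ℂ) 2 × lp (fun _ : G => ℂ) 2) :
    twistedCLM ho hmem g z =
      (regularCLM g z.1 + commCLM ho hmem g z.2, regularCLM g z.2) := rfl

lemma norm_twistedCLM_le (g : G) : ‖twistedCLM ho hmem g‖ ≤ 1 + (C + C) := by
  refine ContinuousLinearMap.opNorm_le_bound _ (by positivity) fun z => ?_
  have h1 : ‖z.1‖ ≤ ‖z‖ := norm_fst_le z
  have h2 : ‖z.2‖ ≤ ‖z‖ := norm_snd_le z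
  have hC : (0 : ℝ) ≤ (C + C) * ‖z‖ := by positivity
  rw [twistedCLM_apply]
  refine norm_prod_le_iff.2 ⟨?_, ?_⟩
  · refine (norm_add_le _ _).trans ?_
    rw [norm_regularCLM_apply, add_mul, one_mul]
    refine add_le_add h1
      (((commCLM ho hmem g).le_of_opNorm_le (norm_commCLM_le ho hmem g) _).trans ?_)
    gcongr
  · rw [norm_regularCLM_apply]
    linarith

/-- The triangular representation as a homomorphism. -/
noncomputable def twistedHom : G →*
    ((lp (fun _ : G => ℂ) 2 × lp (fun _ : G => ℂ) 2) →L[ℂ]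
      (lp (fun _ : G => ℂ) 2 × lp (fun _ : G => ℂ) 2)) where
  toFun := twistedCLM ho hmem
  map_one' := by
    refine ContinuousLinearMap.ext fun z => ?_
    rw [twistedCLM_apply]
    refine Prod.ext ?_ ?_
    · ext x
      simp [commCLM_apply, regularCLM_apply]
    · ext x
      simp [regularCLM_apply]
  map_mul' g h := by
    refine ContinuousLinearMap.ext fun z => ?_
    change twistedCLM ho hmem (g * h) z = twistedCLM ho hmem g (twistedCLM ho hmem h z)
    simp only [twistedCLM_apply, commCLM_mul]
    refine Prod.ext ?_ ?_
    · ext x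
      simp only [lp.coeFn_add, Pi.add_apply, map_add, regularCLM_apply, mul_inv_rev, mul_assoc]
      ring
    · ext x
      simp only [regularCLM_apply, mul_inv_rev, mul_assoc]

/-- The triangular representation on a Hilbert space. -/
noncomputable def twistedRep : G →*
    (WithLp 2 (lp (fun _ : G => ℂ) 2 × lp (fun _ : G => ℂ) 2) ≃L[ℂ]
      WithLp 2 (lp (fun _ : G => ℂ) 2 × lp (fun _ : G => ℂ) 2)) :=
  ((ContinuousLinearEquiv.unitsEquiv ℂ _).toMonoidHom).comp <| MonoidHom.toHomUnits
    { toFun := fun g => (WithLp.prodContinuousLinearEquiv 2 ℂ _ _).symm.toContinuousLinearMap ∘L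
        twistedHom ho hmem g ∘L (WithLp.prodContinuousLinearEquiv 2 ℂ _ _).toContinuousLinearMap
      map_one' := by
        refine ContinuousLinearMap.ext fun z => ?_
        simp
      map_mul' := fun g h => by
        refine ContinuousLinearMap.ext fun z => ?_
        simp }

lemma ofLp_twistedRep (g : G) (z : WithLp 2 (lp (fun _ : G => ℂ) 2 × lp (fun _ : G => ℂ) 2)) :
    WithLp.ofLp (twistedRep ho hmem g z) = twistedCLM ho hmem g (WithLp.ofLp z) := rfl

lemma uniformlyBoundedRep_twistedRep : UniformlyBoundedRep (twistedRep ho hmem) := by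
  let e := WithLp.prodContinuousLinearEquiv 2 ℂ (lp (fun _ : G => ℂ) 2) (lp (fun _ : G => ℂ) 2)
  refine ⟨‖e.symm.toContinuousLinearMap‖ * ((1 + (C + C)) * ‖e.toContinuousLinearMap‖),
    fun g => ?_⟩
  have hg : (twistedRep ho hmem g).toContinuousLinearMap =
      e.symm.toContinuousLinearMap ∘L (twistedCLM ho hmem g ∘L e.toContinuousLinearMap) :=
    ContinuousLinearMap.ext fun z => rfl
  rw [hg]
  refine (ContinuousLinearMap.opNorm_comp_le _ _).trans
    (mul_le_mul_of_nonneg_left ?_ (norm_nonneg _))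
  exact (ContinuousLinearMap.opNorm_comp_le _ _).trans
    (mul_le_mul_of_nonneg_right (norm_twistedCLM_le ho hmem g) (norm_nonneg _))

end Orientation

/-- The orthogonal projection onto an invariant subspace commutes with a unitary
representation. -/
lemma starProjection_comm {E : Type*} [NormedAddCommGroup E] [InnerProductSpace ℂ E]
    (U V : E →ₗ[ℂ] E) (hU : ∀ v, ‖U v‖ = ‖v‖) (hUV : ∀ v, U (V v) = v)
    (W : Submodule ℂ E) [W.HasOrthogonalProjection] (hUW : ∀ w ∈ W, U w ∈ W)
    (hVW : ∀ w ∈ W, V w ∈ W) (v : E) :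
    W.starProjection (U v) = U (W.starProjection v) := by
  let Ui : E →ₗᵢ[ℂ] E := ⟨U, hU⟩
  refine Submodule.eq_starProjection_of_mem_of_inner_eq_zero
    (hUW _ (Submodule.starProjection_apply_mem _ _)) fun w hw => ?_
  rw [← map_sub, ← hUV w]
  refine (Ui.inner_map_map _ _).trans ?_
  exact Submodule.starProjection_inner_eq_zero _ _ (hVW w hw)

section Orientation

variable {s : ℕ → G} {C : ℕ} {o : G × ℕ → G × Fin C}
  (ho : Function.Injective o) (hmem : ∀ x n, (o (x, n)).1 = x ∨ (o (x, n)).1 = x * s n)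

/-- If the twisted representation is unitarizable then the derivation is inner. -/
lemma exists_inner_of_isUnitarizableRep (h : IsUnitarizableRep (twistedRep ho hmem)) :
    ∃ Z : lp (fun _ : G => ℂ) 2 →L[ℂ] lp (fun _ : G => ℂ) 2, ∀ g v,
      commCLM ho hmem g v + Z (regularCLM g v) = regularCLM g (Z v) := by
  obtain ⟨S, hS⟩ := h
  let e := WithLp.prodContinuousLinearEquiv 2 ℂ (lp (fun _ : G => ℂ) 2) (lp (fun _ : G => ℂ) 2)
  let f := S.trans e
  let U : G → (WithLp 2 (lp (fun _ : G => ℂ) 2 × lp (fun _ : G => ℂ) 2) →L[ℂ]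
      WithLp 2 (lp (fun _ : G => ℂ) 2 × lp (fun _ : G => ℂ) 2)) := fun g =>
    S.symm.toContinuousLinearMap ∘L (twistedRep ho hmem g).toContinuousLinearMap ∘L
      S.toContinuousLinearMap
  have hU : ∀ g v, f (U g v) = twistedCLM ho hmem g (f v) := by
    intro g v
    simp only [f, U, ContinuousLinearEquiv.trans_apply, ContinuousLinearMap.comp_apply,
      ContinuousLinearEquiv.coe_coe, ContinuousLinearEquiv.apply_symm_apply]
    exact ofLp_twistedRep ho hmem g (S v)
  have hUU : ∀ g v, U g (U g⁻¹ v) = v := by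
    intro g v
    simp only [U, ContinuousLinearMap.comp_apply, ContinuousLinearEquiv.coe_coe,
      ContinuousLinearEquiv.apply_symm_apply]
    have : ∀ z, twistedRep ho hmem g (twistedRep ho hmem g⁻¹ z) = z := by
      intro z
      change (twistedRep ho hmem g * twistedRep ho hmem g⁻¹) z = z
      rw [← map_mul, mul_inv_cancel, map_one]
      rfl
    rw [this, ContinuousLinearEquiv.symm_apply_apply]
  let W : Submodule ℂ (WithLp 2 (lp (fun _ : G => ℂ) 2 × lp (fun _ : G => ℂ) 2)) :=
    LinearMap.ker ((ContinuousLinearMap.snd ℂ (lp (fun _ : G => ℂ) 2) (lp (fun _ : G => ℂ) 2)) ∘L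
      f.toContinuousLinearMap).toLinearMap
  have hW : ∀ v, v ∈ W ↔ (f v).2 = 0 := fun v => Iff.rfl
  have hWclosed : IsClosed
      (W : Set (WithLp 2 (lp (fun _ : G => ℂ) 2 × lp (fun _ : G => ℂ) 2))) :=
    ContinuousLinearMap.isClosed_ker
    ((ContinuousLinearMap.snd ℂ (lp (fun _ : G => ℂ) 2) (lp (fun _ : G => ℂ) 2)) ∘L
      f.toContinuousLinearMap)
  have : CompleteSpace W := hWclosed.completeSpace_coe
  have hUW : ∀ g, ∀ w ∈ W, U g w ∈ W := by
    intro g w hw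
    rw [hW] at hw ⊢
    rw [hU, twistedCLM_apply, hw]
    exact map_zero _
  have hcomm : ∀ g v, W.starProjection (U g v) = U g (W.starProjection v) := fun g v =>
    starProjection_comm (U g).toLinearMap (U g⁻¹).toLinearMap (hS g) (hUU g) W (hUW g)
      (hUW g⁻¹) v
  let p : (lp (fun _ : G => ℂ) 2 × lp (fun _ : G => ℂ) 2) →L[ℂ]
      (lp (fun _ : G => ℂ) 2 × lp (fun _ : G => ℂ) 2) :=
    f.toContinuousLinearMap ∘L W.starProjection ∘L f.symm.toContinuousLinearMap
  have hp : ∀ z, p z = f (W.starProjection (f.symm z)) := fun z => rfl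
  have hp2 : ∀ z, (p z).2 = 0 := fun z => (hW _).1 (Submodule.starProjection_apply_mem _ _)
  have hpfix : ∀ u, p (u, 0) = (u, 0) := by
    intro u
    rw [hp, Submodule.starProjection_eq_self_iff.2, f.apply_symm_apply]
    rw [hW, f.apply_symm_apply]
  have hpcomm : ∀ g z, p (twistedCLM ho hmem g z) = twistedCLM ho hmem g (p z) := by
    intro g z
    have : f.symm (twistedCLM ho hmem g z) = U g (f.symm z) := by
      rw [ContinuousLinearEquiv.symm_apply_eq, hU, f.apply_symm_apply]
    rw [hp, this, hcomm, hU, ← hp]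
  refine ⟨ContinuousLinearMap.fst ℂ _ _ ∘L p ∘L ContinuousLinearMap.inr ℂ _ _, fun g v => ?_⟩
  have h1 := congrArg Prod.fst (hpcomm g (0, v))
  rw [twistedCLM_apply, twistedCLM_apply, hp2, map_zero, map_zero, add_zero, zero_add] at h1
  have h2 : (commCLM ho hmem g v, regularCLM g v) =
      (commCLM ho hmem g v, 0) + (0, regularCLM g v) := by simp
  simp only at h1
  rw [h2, map_add, hpfix] at h1
  exact h1

/-- A group with an orientation of bounded outdegree and bounded assigned indegree of the Cayley
graph for infinitely many labels is not unitarizable. -/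
theorem not_unitarizable_of_orientation (s : ℕ → G) (C : ℕ) (o : G × ℕ → G × Fin C)
    (ho : Function.Injective o) (hmem : ∀ x n, (o (x, n)).1 = x ∨ (o (x, n)).1 = x * s n) :
    ¬ Unitarizable G := by
  classical
  intro hunit
  obtain ⟨Z, hZ⟩ := exists_inner_of_isUnitarizableRep ho hmem
    (hunit _ _ (uniformlyBoundedRep_twistedRep ho hmem))
  let δ : G → lp (fun _ : G => ℂ) 2 := fun y => lp.single 2 y 1
  have hδ : ∀ g y, regularCLM g (δ y) = δ (g * y) := by
    intro g y
    ext x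
    rw [regularCLM_apply]
    simp only [δ, lp.single_apply, Pi.single_apply, inv_mul_eq_iff_eq_mul]
  let r : G → G → ℂ := fun x y => if y ∈ row s o x then 1 else 0
  have hr : ∀ x y, ∑ z ∈ row s o x, δ y z = r x y := by
    intro x y
    simp [δ, lp.single_apply, Pi.single_apply, r]
  have hinv : ∀ x : G, r 1 x⁻¹ + Z (δ x⁻¹) 1 = r x 1 + Z (δ 1) x := by
    intro x
    have h1 := congrArg (fun u : lp (fun _ : G => ℂ) 2 => u 1) (hZ x⁻¹ (δ 1))
    simp only [lp.coeFn_add, Pi.add_apply, commCLM_apply, hδ, mul_one, regularCLM_apply,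
      inv_inv] at h1
    have h2 : ∑ y ∈ row s o 1, δ 1 (x * y) = r 1 x⁻¹ := by
      rw [← hr]
      refine sum_congr rfl fun y _ => ?_
      have := congrArg (fun u : lp (fun _ : G => ℂ) 2 => u y) (hδ x⁻¹ 1)
      simpa [regularCLM_apply] using this
    rw [h2, hr] at h1
    linear_combination h1
  have hrow : Memℓp (fun x : G => r 1 x⁻¹ + Z (δ x⁻¹) 1) 2 := by
    have hZ1 : Memℓp (fun y : G => Z (δ y) 1) 2 := by
      have : (fun y : G => Z (δ y) 1) =
          fun y => (starRingEnd ℂ) (ContinuousLinearMap.adjoint Z (δ 1) y) := by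
        funext y
        have h1 := ContinuousLinearMap.adjoint_inner_left Z (δ y) (δ 1)
        simp only [δ, lp.inner_single_right, lp.inner_single_left] at h1
        simpa using h1.symm
      rw [this]
      have hm := lp.memℓp (ContinuousLinearMap.adjoint Z (δ 1))
      rw [memℓp_gen_iff (by norm_num)] at hm ⊢
      simpa using hm
    have hr1 : Memℓp (fun y : G => r 1 y) 2 := by
      refine (memℓp_zero ((row s o 1).finite_toSet.subset fun y hy => ?_)).of_exponent_ge
        (by simp)
      by_contra hn
      exact hy (if_neg hn)
    have hsum := hr1.add hZ1
    rw [memℓp_gen_iff (by norm_num)] at hsum ⊢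
    exact (Equiv.inv G).summable_iff.2 hsum
  have hcol : Memℓp (fun x : G => r x 1) 2 := by
    have := hrow.sub (lp.memℓp (Z (δ 1)))
    convert this using 1
    funext x
    simp [hinv x]
  have hfin : {x | Points s o x 1}.Finite := by
    rw [memℓp_gen_iff (by norm_num)] at hcol
    have h := hcol.tendsto_cofinite_zero
    have h1 := h.eventually (gt_mem_nhds (zero_lt_one))
    refine Set.Finite.subset (Filter.eventually_cofinite.1 h1) fun x hx => ?_
    have : r x 1 = 1 := if_pos ((mem_row ho).2 hx)
    simp [this]
  have hnot : {n | ¬ Points s o (s n)⁻¹ 1}.Finite := by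
    obtain ⟨h1, -⟩ := finite_assigned ho 1
      ((fun n => ((s n)⁻¹, n)) '' {n | ¬ Points s o (s n)⁻¹ 1}) (by
        rintro _ ⟨n, hn, rfl⟩
        exact assigned_target hmem (by simp) hn)
    exact Set.Finite.of_finite_image h1 fun n _ m _ h => (Prod.ext_iff.1 h).2
  have hrange : (Set.range s).Finite := by
    have : Set.range s ⊆ ((·⁻¹) '' {x | Points s o x 1}) ∪
        s '' {n | ¬ Points s o (s n)⁻¹ 1} := by
      rintro _ ⟨n, rfl⟩
      by_cases hn : Points s o (s n)⁻¹ 1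
      · exact Or.inl ⟨(s n)⁻¹, hn, inv_inv _⟩
      · exact Or.inr ⟨n, hn, rfl⟩
    exact ((hfin.image _).union (hnot.image _)).subset this
  have hinj : Function.Injective fun n => o (1, n) := fun n m h => (Prod.ext_iff.1 (ho h)).2
  refine Set.infinite_range_of_injective hinj
    (((hrange.union (Set.finite_singleton 1)).prod (Set.finite_univ)).subset ?_)
  rintro _ ⟨n, rfl⟩
  refine ⟨?_, Set.mem_univ _⟩
  rcases hmem 1 n with h | h
  · exact Or.inr h
  · exact Or.inl ⟨n, by rw [h, one_mul]⟩

end Orientation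

end OrientedCayley

/-! ### The Grigorchuk group -/

namespace Grigorchuk

/-- The generators of the Grigorchuk group. -/
inductive Letter
  | a | b | c | d

namespace Letter

/-- The action of a letter on the first level of the binary tree. -/
def flip : Letter → Bool → Bool
  | a, x => !x
  | _, x => x

/-- The section of a letter at a vertex of the first level, as a word of length at most one. -/
def sec : Letter → Bool → List Letter
  | a, _ => []
  | b, false => [a]
  | b, true => [c]
  | c, false => [a]
  | c, true => [d]
  | d, false => []
  | d, true => [b]

/-- The weight of a letter. -/
def wt : Letter → ℕ
  | a => 3
  | b => 4
  | c => 3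
  | d => 2

/-- The action of a letter on the binary tree. -/
def act : Letter → List Bool → List Bool
  | _, [] => []
  | a, x :: v => (!x) :: v
  | b, false :: v => false :: act a v
  | b, true :: v => true :: act c v
  | c, false :: v => false :: act a v
  | c, true :: v => true :: act d v
  | d, false :: v => false :: v
  | d, true :: v => true :: act b v

lemma act_act (l : Letter) (v : List Bool) : l.act (l.act v) = v := by
  induction v generalizing l with
  | nil => cases l <;> simp [act]
  | cons x v ih => cases l <;> cases x <;> simp [act, ih]

/-- A letter as a permutation of the vertices of the binary tree. -/
def gen (l : Letter) : Equiv.Perm (List Bool) := Function.Involutive.toPerm l.act l.act_act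

lemma gen_apply (l : Letter) (v : List Bool) : l.gen v = l.act v := rfl

lemma gen_mul_gen (l : Letter) : l.gen * l.gen = 1 := Equiv.ext l.act_act

lemma gen_inv (l : Letter) : l.gen⁻¹ = l.gen := inv_eq_of_mul_eq_one_left l.gen_mul_gen

lemma act_triple (v : List Bool) : b.act (c.act v) = d.act v ∧ c.act (d.act v) = b.act v ∧
    d.act (b.act v) = c.act v := by
  induction v with
  | nil => simp [act]
  | cons x v ih => cases x <;> simp [act, ih, act_act]

lemma gen_b_mul_c : b.gen * c.gen = d.gen := Equiv.ext fun v => (act_triple v).1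

lemma gen_c_mul_d : c.gen * d.gen = b.gen := Equiv.ext fun v => (act_triple v).2.1

lemma gen_d_mul_b : d.gen * b.gen = c.gen := Equiv.ext fun v => (act_triple v).2.2

end Letter

open Letter

/-- The permutation of the binary tree represented by a word. -/
def eval (w : List Letter) : Equiv.Perm (List Bool) := (w.map gen).prod

@[simp] lemma eval_nil : eval [] = 1 := rfl

lemma eval_cons (l : Letter) (w : List Letter) : eval (l :: w) = l.gen * eval w := by
  simp [eval]

lemma eval_append (v w : List Letter) : eval (v ++ w) = eval v * eval w := by
  simp [eval]

lemma eval_reverse (w : List Letter) : eval w.reverse = (eval w)⁻¹ := by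
  induction w with
  | nil => simp
  | cons l w ih => simp [eval_append, eval_cons, ih, gen_inv]

/-- The action of a word on the first level. -/
def flipWord : List Letter → Bool → Bool
  | [], x => x
  | l :: w, x => l.flip (flipWord w x)

/-- The section of a word at a vertex of the first level. -/
def secWord : List Letter → Bool → List Letter
  | [], _ => []
  | l :: w, x => l.sec (flipWord w x) ++ secWord w x

/-- The weight of a word. -/
def wtWord (w : List Letter) : ℕ := (w.map wt).sum

lemma wtWord_cons (l : Letter) (w : List Letter) : wtWord (l :: w) = l.wt + wtWord w := by
  simp [wtWord]

lemma wtWord_append (v w : List Letter) : wtWord (v ++ w) = wtWord v + wtWord w := by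
  simp [wtWord]

lemma gen_apply_cons (l : Letter) (x : Bool) (v : List Bool) :
    l.gen (x :: v) = l.flip x :: eval (l.sec x) v := by
  cases l <;> cases x <;> simp [gen_apply, act, Letter.flip, sec, eval]

lemma eval_apply_nil (w : List Letter) : eval w [] = [] := by
  induction w with
  | nil => rfl
  | cons l w ih => rw [eval_cons, Equiv.Perm.mul_apply, ih]; cases l <;> rfl

lemma eval_apply_cons (w : List Letter) (x : Bool) (v : List Bool) :
    eval w (x :: v) = flipWord w x :: eval (secWord w x) v := by
  induction w with
  | nil => rfl
  | cons l w ih =>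
    rw [eval_cons, Equiv.Perm.mul_apply, ih, gen_apply_cons, flipWord, secWord, eval_append,
      Equiv.Perm.mul_apply]

lemma flipWord_not (w : List Letter) (x : Bool) : flipWord w (!x) = !flipWord w x := by
  induction w with
  | nil => rfl
  | cons l w ih => cases l <;> simp [flipWord, Letter.flip, ih]

lemma flipWord_append (v w : List Letter) (x : Bool) :
    flipWord (v ++ w) x = flipWord v (flipWord w x) := by
  induction v with
  | nil => rfl
  | cons l v ih => simp [flipWord, ih]

lemma secWord_append (v w : List Letter) (x : Bool) :
    secWord (v ++ w) x = secWord v (flipWord w x) ++ secWord w x := by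
  induction v with
  | nil => rfl
  | cons l v ih => simp [secWord, ih, flipWord_append]

/-- Words in which letters other than `a` are never adjacent. -/
def Reduced (w : List Letter) : Prop := w.IsChain fun l m => l = a ∨ m = a

lemma exists_lighter_of_pair (l m : Letter) (hl : l ≠ a) (hm : m ≠ a) :
    ∃ z, eval z = eval [l, m] ∧ wtWord z < wtWord [l, m] := by
  have hcb : c.gen * b.gen = d.gen := by
    rw [← gen_inv c, ← gen_inv b, ← mul_inv_rev, gen_b_mul_c, gen_inv]
  have hdc : d.gen * c.gen = b.gen := by
    rw [← gen_inv c, ← gen_inv d, ← mul_inv_rev, gen_c_mul_d, gen_inv]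
  have hbd : b.gen * d.gen = c.gen := by
    rw [← gen_inv b, ← gen_inv d, ← mul_inv_rev, gen_d_mul_b, gen_inv]
  have main : (l = m) ∨ ∃ n : Letter, l.gen * m.gen = n.gen ∧ n.wt < l.wt + m.wt := by
    cases l <;> cases m <;> simp at hl hm ⊢
    exacts [⟨d, gen_b_mul_c, by decide⟩, ⟨c, hbd, by decide⟩, ⟨d, hcb, by decide⟩,
      ⟨b, gen_c_mul_d, by decide⟩, ⟨c, gen_d_mul_b, by decide⟩, ⟨b, hdc, by decide⟩]
  rcases main with rfl | ⟨n, h1, h2⟩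
  · refine ⟨[], by simp [eval, gen_mul_gen], ?_⟩
    cases l <;> simp [wtWord, wt]
  · exact ⟨[n], by simpa [eval] using h1.symm, by simpa [wtWord] using h2⟩

lemma exists_lighter (w : List Letter) (hw : ¬ Reduced w) :
    ∃ z, eval z = eval w ∧ wtWord z < wtWord w := by
  rw [Reduced, List.isChain_iff_forall_rel_of_append_cons_cons] at hw
  push Not at hw
  obtain ⟨l, m, u, v, rfl, hl, hm⟩ := hw
  obtain ⟨z, hz1, hz2⟩ := exists_lighter_of_pair l m hl hm
  refine ⟨u ++ (z ++ v), ?_, ?_⟩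
  · rw [show u ++ l :: m :: v = u ++ ([l, m] ++ v) by simp]
    simp only [eval_append, hz1]
  · rw [show u ++ l :: m :: v = u ++ ([l, m] ++ v) by simp]
    simp only [wtWord_append]
    omega

/-- The total weight of the two sections of a word. -/
def secWt (w : List Letter) : ℕ := wtWord (secWord w false) + wtWord (secWord w true)

lemma secWt_cons (l : Letter) (w : List Letter) :
    secWt (l :: w) = wtWord (l.sec false) + wtWord (l.sec true) + secWt w := by
  have h : flipWord w true = !flipWord w false := flipWord_not w false
  simp only [secWt, secWord, wtWord_append, h]
  cases flipWord w false <;> simp <;> omega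

lemma secWt_eq (w : List Letter) (x : Bool) :
    wtWord (secWord w (!x)) + wtWord (secWord w x) = secWt w := by
  cases x <;> simp [secWt, add_comm]

lemma secWt_le (w : List Letter) (hw : Reduced w) :
    10 * secWt w ≤ 9 * (wtWord w + 3) ∧ (∀ l ∈ w.head?, l = a → 10 * secWt w ≤ 9 * wtWord w) := by
  induction w with
  | nil => simp [secWt, secWord, wtWord]
  | cons l w ih =>
    have ih := ih (List.IsChain.tail hw)
    rw [secWt_cons, wtWord_cons]
    by_cases hl : l = a
    · subst hl
      simp only [sec, wt, wtWord, List.map_nil, List.sum_nil] at *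
      simp only [List.head?_cons, Option.mem_def, Option.some.injEq]
      refine ⟨?_, fun _ _ _ => ?_⟩ <;> omega
    · have h10 : 10 * (wtWord (l.sec false) + wtWord (l.sec true)) ≤ 9 * (l.wt + 3) := by
        cases l <;> simp [sec, wtWord, wt]
      have hw0 : 10 * secWt w ≤ 9 * wtWord w := by
        cases w with
        | nil => simp [secWt, secWord, wtWord]
        | cons m w =>
          have hm : m = a := by
            rw [Reduced, List.isChain_cons_cons] at hw
            exact hw.1.resolve_left hl
          exact ih.2 m (by simp) hm
      refine ⟨by omega, ?_⟩
      simp [hl]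

lemma secWt_lt_of_head (w : List Letter) (hw : Reduced (a :: w)) :
    secWt (a :: w) < wtWord (a :: w) := by
  have h := (secWt_le _ hw).2 a (by simp) rfl
  have : 0 < wtWord (a :: w) := by rw [wtWord_cons, wt]; omega
  omega

lemma eval_pow_apply_cons (w : List Letter) (hw : ∀ x, flipWord w x = x) (n : ℕ) (x : Bool)
    (v : List Bool) : (eval w ^ n) (x :: v) = x :: (eval (secWord w x) ^ n) v := by
  induction n with
  | zero => rfl
  | succ n ih =>
    rw [pow_succ', Equiv.Perm.mul_apply, ih, eval_apply_cons, hw, pow_succ', Equiv.Perm.mul_apply]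

lemma isOfFinOrder_of_sections (w : List Letter) (hw : ∀ x, flipWord w x = x)
    (hsec : ∀ x, IsOfFinOrder (eval (secWord w x))) : IsOfFinOrder (eval w) := by
  obtain ⟨m, hm, hm1⟩ := isOfFinOrder_iff_pow_eq_one.1 (hsec false)
  obtain ⟨n, hn, hn1⟩ := isOfFinOrder_iff_pow_eq_one.1 (hsec true)
  refine isOfFinOrder_iff_pow_eq_one.2 ⟨m * n, Nat.mul_pos hm hn, Equiv.ext fun v => ?_⟩
  match v with
  | [] =>
    have : ∀ k : ℕ, (eval w ^ k) [] = [] := by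
      intro k
      induction k with
      | zero => rfl
      | succ k ih => rw [pow_succ', Equiv.Perm.mul_apply, ih, eval_apply_nil]
    exact this _
  | false :: v => rw [eval_pow_apply_cons w hw, pow_mul, hm1, one_pow]; rfl
  | true :: v => rw [eval_pow_apply_cons w hw, mul_comm m n, pow_mul, hn1, one_pow]; rfl

theorem isOfFinOrder_eval (w : List Letter) : IsOfFinOrder (eval w) := by
  induction hn : wtWord w using Nat.strong_induction_on generalizing w with
  | _ n ih =>
    subst hn
    have hlight : ∀ z, wtWord z = wtWord w → ¬ Reduced z → IsOfFinOrder (eval z) := by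
      intro z hz hr
      obtain ⟨z', h1, h2⟩ := exists_lighter z hr
      rw [← h1]
      exact ih _ (hz ▸ h2) z' rfl
    have hhead : ∀ z, wtWord (a :: z) = wtWord w → IsOfFinOrder (eval (a :: z)) := by
      intro z hz
      by_cases hr : Reduced (a :: z)
      swap
      · exact hlight _ hz hr
      have hlt := secWt_lt_of_head z hr
      generalize a :: z = y at *
      by_cases hfl : flipWord y false = false
      · have hfix : ∀ x, flipWord y x = x := by
          intro x
          cases x
          · exact hfl
          · exact (flipWord_not y false).trans (by simp [hfl])
        refine isOfFinOrder_of_sections y hfix fun x => ih _ ?_ _ rfl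
        have := secWt_eq y x
        omega
      · have hflip : ∀ x, flipWord y x = !x := by
          intro x
          have h1 : flipWord y false = true := by simpa using hfl
          cases x
          · exact h1
          · exact (flipWord_not y false).trans (by simp [h1])
        have h2 : IsOfFinOrder (eval (y ++ y)) := by
          refine isOfFinOrder_of_sections (y ++ y) (fun x => ?_) fun x => ih _ ?_ _ rfl
          · simp [flipWord_append, hflip]
          · rw [secWord_append, wtWord_append, hflip, secWt_eq]
            omega
        rw [eval_append, ← pow_two] at h2
        exact h2.of_pow two_ne_zero
    match hw : w with
    | [] => exact IsOfFinOrder.one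
    | l :: w' =>
      by_cases hl : l = a
      · subst hl
        exact hhead w' rfl
      by_cases hr : Reduced (l :: w')
      swap
      · exact hlight _ rfl hr
      match w' with
      | [] =>
        refine isOfFinOrder_iff_pow_eq_one.2 ⟨2, two_pos, ?_⟩
        simp [eval, pow_two, gen_mul_gen]
      | m :: w'' =>
        have hm : m = a := by
          rw [Reduced, List.isChain_cons_cons] at hr
          exact hr.1.resolve_left hl
        subst hm
        have h1 := hhead (w'' ++ [l]) (by
          simp only [wtWord, List.map_cons, List.map_append, List.sum_cons, List.sum_append,
            List.map_nil, List.sum_nil]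
          omega)
        have h2 : eval (l :: a :: w'') = l.gen * eval (a :: (w'' ++ [l])) * l.gen⁻¹ := by
          simp only [eval_cons, eval_append, eval_nil, mul_one, mul_assoc, mul_inv_cancel]
        rw [h2, ← MulAut.conj_apply]
        exact (MulAut.conj l.gen).toMonoidHom.isOfFinOrder h1

/-- The Grigorchuk group. -/
def grigorchuk : Subgroup (Equiv.Perm (List Bool)) where
  carrier := Set.range eval
  one_mem' := ⟨[], rfl⟩
  mul_mem' := by
    rintro _ _ ⟨v, rfl⟩ ⟨w, rfl⟩
    exact ⟨v ++ w, eval_append v w⟩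
  inv_mem' := by
    rintro _ ⟨w, rfl⟩
    exact ⟨w.reverse, eval_reverse w⟩

/-- The element of the Grigorchuk group represented by a word. -/
def elt (w : List Letter) : grigorchuk := ⟨eval w, w, rfl⟩

lemma elt_surjective (g : grigorchuk) : ∃ w, elt w = g := by
  obtain ⟨g, w, rfl⟩ := g
  exact ⟨w, rfl⟩

lemma elt_append (v w : List Letter) : elt (v ++ w) = elt v * elt w :=
  Subtype.ext (eval_append v w)

lemma isTorsion_grigorchuk : IsMulTorsion grigorchuk := by
  intro g
  obtain ⟨w, rfl⟩ := elt_surjective g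
  rw [← Submonoid.isOfFinOrder_coe]
  exact isOfFinOrder_eval w

/-- A substitution which is a section of the restriction to the right subtree. -/
def liftWord : List Letter → List Letter
  | [] => []
  | a :: w => a :: b :: a :: liftWord w
  | b :: w => d :: liftWord w
  | c :: w => b :: liftWord w
  | d :: w => c :: liftWord w

lemma liftWord_spec (w : List Letter) :
    flipWord (liftWord w) true = true ∧ secWord (liftWord w) true = w := by
  induction w with
  | nil => exact ⟨rfl, rfl⟩
  | cons l w ih => cases l <;> simp [liftWord, flipWord, secWord, ih, Letter.flip, sec]

lemma infinite_grigorchuk : Infinite grigorchuk := by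
  choose w hw using elt_surjective
  let Λ : grigorchuk → grigorchuk := fun g => elt (liftWord (w g))
  have hΛ : ∀ g v, (Λ g).1 (true :: v) = true :: g.1 v := by
    intro g v
    change eval (liftWord (w g)) (true :: v) = _
    rw [eval_apply_cons, (liftWord_spec _).1, (liftWord_spec _).2]
    conv_rhs => rw [← hw g]
    rfl
  have hinj : Function.Injective Λ := by
    intro g h hgh
    refine Subtype.ext (Equiv.ext fun v => ?_)
    have h1 := hΛ g v
    rw [hgh, hΛ h v] at h1
    simpa using h1.symm
  by_contra hfin
  rw [not_infinite_iff_finite] at hfin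
  obtain ⟨g, hg⟩ := Finite.surjective_of_injective hinj (elt [a])
  have h1 := hΛ g []
  rw [hg] at h1
  simp [elt, eval, gen_apply, act] at h1

/-- The word length of an element with respect to the weights of the letters. -/
noncomputable def len (g : grigorchuk) : ℕ := sInf {n | ∃ w, elt w = g ∧ wtWord w = n}

lemma exists_word_len (g : grigorchuk) : ∃ w, elt w = g ∧ wtWord w = len g := by
  obtain ⟨w, hw⟩ := elt_surjective g
  exact Nat.sInf_mem (s := {n | ∃ w, elt w = g ∧ wtWord w = n}) ⟨_, w, hw, rfl⟩

lemma len_elt_le (w : List Letter) : len (elt w) ≤ wtWord w := Nat.sInf_le ⟨w, rfl, rfl⟩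

lemma len_mul_le (l : Letter) (g : grigorchuk) : len (elt [l] * g) ≤ len g + 4 := by
  obtain ⟨w, rfl, hw⟩ := exists_word_len g
  rw [← elt_append, ← hw]
  refine (len_elt_le _).trans ?_
  rw [List.singleton_append, wtWord_cons]
  have : l.wt ≤ 4 := by cases l <;> simp [wt]
  omega

lemma elt_singleton_mul_self (l : Letter) : elt [l] * elt [l] = 1 :=
  Subtype.ext (by simpa [elt, eval] using l.gen_mul_gen)

lemma elt_singleton_inv (l : Letter) : (elt [l])⁻¹ = elt [l] :=
  inv_eq_of_mul_eq_one_left (elt_singleton_mul_self l)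

lemma len_le_len_mul (l : Letter) (g : grigorchuk) : len g ≤ len (elt [l] * g) + 4 := by
  have := len_mul_le l (elt [l] * g)
  rwa [← mul_assoc, elt_singleton_mul_self, one_mul] at this

/-- An element is determined by its action on the first level and its two sections, and the
sections are shorter. -/
lemma exists_sections : ∃ σ : grigorchuk → Bool × grigorchuk × grigorchuk,
    Function.Injective σ ∧ ∀ g, 10 * (len (σ g).2.1 + len (σ g).2.2) ≤ 9 * (len g + 3) := by
  choose w hw hlen using exists_word_len
  have hred : ∀ g, Reduced (w g) := by
    intro g
    by_contra h
    obtain ⟨z, h1, h2⟩ := exists_lighter _ h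
    have h3 : elt z = g := (Subtype.ext h1 : elt z = elt (w g)).trans (hw g)
    have h4 := len_elt_le z
    rw [h3, ← hlen g] at h4
    omega
  refine ⟨fun g => (flipWord (w g) false, elt (secWord (w g) false), elt (secWord (w g) true)),
    ?_, fun g => ?_⟩
  · intro g h hgh
    simp only [Prod.mk.injEq] at hgh
    obtain ⟨h1, h2, h3⟩ := hgh
    rw [← hw g, ← hw h]
    refine Subtype.ext (Equiv.ext fun v => ?_)
    change eval (w g) v = eval (w h) v
    have h2' : eval (secWord (w g) false) = eval (secWord (w h) false) := congrArg Subtype.val h2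
    have h3' : eval (secWord (w g) true) = eval (secWord (w h) true) := congrArg Subtype.val h3
    have h4 : flipWord (w g) true = flipWord (w h) true :=
      (flipWord_not _ false).trans ((congrArg _ h1).trans (flipWord_not _ false).symm)
    match v with
    | [] => rw [eval_apply_nil, eval_apply_nil]
    | false :: v => rw [eval_apply_cons, eval_apply_cons, h1, h2']
    | true :: v => rw [eval_apply_cons, eval_apply_cons, h4, h3']
  · have h1 := (secWt_le _ (hred g)).1
    rw [hlen] at h1
    refine le_trans ?_ h1
    have := len_elt_le (secWord (w g) false)
    have := len_elt_le (secWord (w g) true)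
    simp only [secWt]
    omega

/-- An injective numbering of the words. -/
def code : List Letter → ℕ
  | [] => 0
  | a :: w => 5 * code w + 1
  | b :: w => 5 * code w + 2
  | c :: w => 5 * code w + 3
  | d :: w => 5 * code w + 4

lemma code_injective : Function.Injective code := by
  intro v
  induction v with
  | nil =>
    intro w h
    cases w with
    | nil => rfl
    | cons m w => cases m <;> simp [code] at h
  | cons l v ih =>
    intro w h
    cases w with
    | nil => cases l <;> simp [code] at h
    | cons m w =>
      have : l = m ∧ code v = code w := by
        cases l <;> cases m <;> simp only [code] at h <;> simp <;> omega
      rw [this.1, ih this.2]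

lemma code_lt (w : List Letter) : (code w + 1) ^ 2 ≤ 5 ^ wtWord w := by
  induction w with
  | nil => simp [code, wtWord]
  | cons l w ih =>
    have h1 : code (l :: w) + 1 ≤ 5 * (code w + 1) := by
      cases l <;> simp only [code] <;> omega
    have h2 : 2 ≤ l.wt := by cases l <;> simp [wt]
    calc (code (l :: w) + 1) ^ 2 ≤ (5 * (code w + 1)) ^ 2 := Nat.pow_le_pow_left h1 2
      _ = 5 ^ 2 * (code w + 1) ^ 2 := by ring
      _ ≤ 5 ^ l.wt * 5 ^ wtWord w := by gcongr; norm_num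
      _ = 5 ^ wtWord (l :: w) := by rw [wtWord_cons, pow_add]

lemma summable_exp_log_five : Summable fun g => Real.exp (-(Real.log 5 * len g)) := by
  choose w hw hlen using exists_word_len
  have hinj : Function.Injective fun g => code (w g) := fun g h hgh => by
    rw [← hw g, ← hw h, code_injective hgh]
  have hs : Summable fun n : ℕ => (1 : ℝ) / ((n : ℝ) + 1) ^ 2 := by
    have := (summable_nat_add_iff 1).2 (Real.summable_one_div_nat_pow.2 one_lt_two)
    simpa using this
  refine Summable.of_nonneg_of_le (fun g => (Real.exp_pos _).le) (fun g => ?_)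
    (hs.comp_injective hinj)
  have h1 : ((code (w g) : ℝ) + 1) ^ 2 ≤ 5 ^ len g := by
    rw [← hlen]
    exact_mod_cast code_lt (w g)
  have h2 : Real.exp (-(Real.log 5 * len g)) = 1 / 5 ^ len g := by
    rw [Real.exp_neg, mul_comm, Real.exp_nat_mul, Real.exp_log (by norm_num), one_div]
  rw [h2]
  exact one_div_le_one_div_of_le (by positivity) h1

lemma summable_exp_step {L : ℝ} (hL : 0 < L)
    (h : Summable fun g => Real.exp (-(L * len g))) :
    Summable fun g => Real.exp (-(9 / 10 * L * len g)) := by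
  obtain ⟨σ, hσ, hlen⟩ := exists_sections
  have h2 : Summable fun x : grigorchuk × grigorchuk =>
      Real.exp (-(L * len x.1)) * Real.exp (-(L * len x.2)) :=
    h.mul_of_nonneg h (fun _ => (Real.exp_pos _).le) fun _ => (Real.exp_pos _).le
  have h3 : Summable fun x : Bool × grigorchuk × grigorchuk =>
      (1 : ℝ) * (Real.exp (-(L * len x.2.1)) * Real.exp (-(L * len x.2.2))) :=
    (Summable.of_finite (f := fun _ : Bool => (1 : ℝ))).mul_of_nonneg h2 (fun _ => zero_le_one)
      fun _ => by positivity
  refine Summable.of_nonneg_of_le (fun g => (Real.exp_pos _).le) (fun g => ?_)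
    ((h3.comp_injective hσ).mul_left (Real.exp (27 / 10 * L)))
  simp only [Function.comp_apply, one_mul]
  rw [← Real.exp_add, ← Real.exp_add]
  refine Real.exp_le_exp.2 ?_
  have h4 : 10 * ((len (σ g).2.1 : ℝ) + len (σ g).2.2) ≤ 9 * (len g + 3) := by
    exact_mod_cast hlen g
  nlinarith

lemma exists_summable_exp {η : ℝ} (hη : 0 < η) :
    ∃ L, 0 < L ∧ L < η ∧ Summable fun g => Real.exp (-(L * len g)) := by
  have h5 : 0 < Real.log 5 := Real.log_pos (by norm_num)
  have hn : ∀ n : ℕ, Summable fun g => Real.exp (-((9 / 10) ^ n * Real.log 5 * len g)) := by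
    intro n
    induction n with
    | zero => simpa using summable_exp_log_five
    | succ n ih =>
      have := summable_exp_step (by positivity) ih
      simpa only [pow_succ', mul_assoc] using this
  obtain ⟨n, hn'⟩ := exists_pow_lt_of_lt_one (div_pos hη h5) (by norm_num : (9 / 10 : ℝ) < 1)
  exact ⟨_, by positivity, (lt_div_iff₀ h5).1 hn', hn n⟩

lemma closure_letters : Subgroup.closure {elt [a], elt [b], elt [c], elt [d]} = ⊤ := by
  refine eq_top_iff.2 fun g _ => ?_
  obtain ⟨w, rfl⟩ := elt_surjective g
  induction w with
  | nil => exact Subgroup.one_mem _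
  | cons l w ih =>
    have h : elt (l :: w) = elt [l] * elt w := elt_append [l] w
    rw [h]
    refine Subgroup.mul_mem _ (Subgroup.subset_closure ?_) (ih trivial)
    cases l <;> simp

lemma exists_almost_invariant {ε : ℝ} (hε : 0 < ε) :
    ∃ u : lp (fun _ : grigorchuk => ℂ) 2, ‖u‖ = 1 ∧
      ∀ l : Letter, ‖leftRegular (elt [l]) u - u‖ < ε := by
  obtain ⟨η, hη, hη'⟩ : ∃ η : ℝ, 0 < η ∧ ∀ L, 0 < L → L < η → Real.exp (2 * L) - 1 < ε := by
    have hc : Filter.Tendsto (fun L : ℝ => Real.exp (2 * L) - 1) (nhds 0) (nhds 0) := by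
      have : Continuous fun L : ℝ => Real.exp (2 * L) - 1 := by fun_prop
      simpa using this.tendsto 0
    obtain ⟨η, hη, h⟩ := Metric.eventually_nhds_iff.1 (hc.eventually (gt_mem_nhds hε))
    exact ⟨η, hη, fun L h0 h1 => h (by rw [dist_zero_right, Real.norm_of_nonneg h0.le]; exact h1)⟩
  obtain ⟨L, hL, hLη, hsum⟩ := exists_summable_exp hη
  let f : lp (fun _ : grigorchuk => ℂ) 2 := ⟨fun g => (Real.exp (-(L * len g) / 2) : ℂ), by
    refine memℓp_gen ?_
    refine hsum.congr fun g => ?_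
    have h2 : (2 : ENNReal).toReal = ((2 : ℕ) : ℝ) := by norm_num
    rw [h2, Real.rpow_natCast, Complex.norm_real, Real.norm_of_nonneg (Real.exp_pos _).le, pow_two,
      ← Real.exp_add]
    ring_nf⟩
  have hfg : ∀ g, f g = (Real.exp (-(L * len g) / 2) : ℂ) := fun g => rfl
  have hf0 : ‖f‖ ≠ 0 := by
    rw [norm_ne_zero_iff]
    intro h
    have := hfg 1
    rw [h] at this
    simp at this
    exact Complex.exp_ne_zero _ this.symm
  have hbound : ∀ l : Letter, ‖leftRegular (elt [l]) f - f‖ ≤ (Real.exp (2 * L) - 1) * ‖f‖ := by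
    intro l
    have hE : 0 ≤ Real.exp (2 * L) - 1 := by
      have := Real.add_one_le_exp (2 * L); linarith
    have : (Real.exp (2 * L) - 1) * ‖f‖ = ‖((Real.exp (2 * L) - 1 : ℝ) : ℂ) • f‖ := by
      rw [norm_smul, Complex.norm_real, Real.norm_of_nonneg hE]
    rw [this]
    refine lp.norm_mono two_ne_zero fun g => ?_
    simp only [lp.coeFn_sub, lp.coeFn_smul, Pi.sub_apply, Pi.smul_apply, smul_eq_mul, norm_mul]
    change ‖f ((elt [l])⁻¹ * g) - f g‖ ≤ _
    rw [elt_singleton_inv, hfg, hfg, ← Complex.ofReal_sub, Complex.norm_real, Complex.norm_real,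
      Complex.norm_real, Real.norm_of_nonneg hE, Real.norm_of_nonneg (Real.exp_pos _).le]
    have h1 : (len (elt [l] * g) : ℝ) ≤ len g + 4 := by exact_mod_cast len_mul_le l g
    have h2 : (len g : ℝ) ≤ len (elt [l] * g) + 4 := by exact_mod_cast len_le_len_mul l g
    set x : ℝ := ((len (elt [l] * g) : ℕ) : ℝ)
    set y : ℝ := ((len g : ℕ) : ℝ)
    have hsplit : Real.exp (-(L * x) / 2) =
        Real.exp (L * (y - x) / 2) * Real.exp (-(L * y) / 2) := by
      rw [← Real.exp_add]; ring_nf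
    have hup : Real.exp (L * (y - x) / 2) ≤ Real.exp (2 * L) := Real.exp_le_exp.2 (by nlinarith)
    have hlow : Real.exp (-(2 * L)) ≤ Real.exp (L * (y - x) / 2) :=
      Real.exp_le_exp.2 (by nlinarith)
    have hsum2 : 2 ≤ Real.exp (2 * L) + Real.exp (-(2 * L)) := by
      have h3 := Real.add_one_le_exp (2 * L)
      have h4 := Real.add_one_le_exp (-(2 * L))
      linarith
    rw [hsplit, Real.norm_eq_abs]
    have : Real.exp (L * (y - x) / 2) * Real.exp (-(L * y) / 2) - Real.exp (-(L * y) / 2)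
        = (Real.exp (L * (y - x) / 2) - 1) * Real.exp (-(L * y) / 2) := by ring
    rw [this, abs_mul, abs_of_pos (Real.exp_pos (-(L * y) / 2))]
    refine mul_le_mul_of_nonneg_right (abs_le.2 ⟨?_, ?_⟩) (Real.exp_pos _).le <;> linarith
  refine ⟨((‖f‖⁻¹ : ℝ) : ℂ) • f, ?_, fun l => ?_⟩
  · rw [norm_smul, Complex.norm_real, norm_inv, norm_norm, inv_mul_cancel₀ hf0]
  · have : leftRegular (elt [l]) (((‖f‖⁻¹ : ℝ) : ℂ) • f) - ((‖f‖⁻¹ : ℝ) : ℂ) • f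
        = ((‖f‖⁻¹ : ℝ) : ℂ) • (leftRegular (elt [l]) f - f) := by
      rw [smul_sub]; rfl
    rw [this, norm_smul, Complex.norm_real, norm_inv, norm_norm]
    calc ‖f‖⁻¹ * ‖leftRegular (elt [l]) f - f‖ ≤ ‖f‖⁻¹ * ((Real.exp (2 * L) - 1) * ‖f‖) := by
          gcongr
          exact hbound l
      _ = Real.exp (2 * L) - 1 := by field_simp
      _ < ε := hη' L hL hLη

/-- There is an infinite finitely generated torsion group whose regular representation has almost
invariant vectors. -/
theorem exists_infinite_torsion_amenable :
    ∃ (A : Type) (_ : Group A) (S : Finset A), Subgroup.closure (S : Set A) = ⊤ ∧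
      IsMulTorsion A ∧ Infinite A ∧ ∀ ε : ℝ, 0 < ε →
        ∃ u : lp (fun _ : A => ℂ) 2, ‖u‖ = 1 ∧ ∀ s ∈ S, ‖leftRegular s u - u‖ < ε := by
  classical
  refine ⟨grigorchuk, inferInstance, {elt [a], elt [b], elt [c], elt [d]}, ?_,
    isTorsion_grigorchuk, infinite_grigorchuk, fun ε hε => ?_⟩
  · rw [← closure_letters]
    simp
  · obtain ⟨u, hu, h⟩ := exists_almost_invariant hε
    refine ⟨u, hu, fun s hs => ?_⟩
    simp only [Finset.mem_insert, Finset.mem_singleton] at hs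
    rcases hs with rfl | rfl | rfl | rfl <;> exact h _

end Grigorchuk

/-! ### Lamp configurations along a sparse sequence -/

namespace LampExtension

open RegularWreathProduct
open scoped commutatorElement

variable {A W : Type*} [Group A] [Group W]

/-- The base group of a regular wreath product. -/
def base : (A → W) →* W ≀ᵣ A where
  toFun a := ⟨a, 1⟩
  map_one' := rfl
  map_mul' _ _ := by ext <;> simp

@[simp] lemma base_left (a : A → W) : (base a).left = a := rfl

@[simp] lemma base_right (a : A → W) : (base a).right = 1 := rfl

lemma base_left_of_right_eq_one {g : W ≀ᵣ A} (hg : g.right = 1) : base g.left = g :=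
  RegularWreathProduct.ext rfl hg.symm

lemma inl_conj_base (x : A) (a : A → W) :
    inl x * base a * (inl x)⁻¹ = base fun y => a (x⁻¹ * y) := by
  ext <;> simp

lemma isOfFinOrder_pi {X : Type*} {a : X → W} (hW : IsMulTorsion W) (E : Finset X) {N : ℕ}
    (hN : 0 < N) (ha : ∀ x ∉ E, a x ^ N = 1) : IsOfFinOrder a := by
  rw [isOfFinOrder_iff_pow_eq_one]
  refine ⟨N * ∏ x ∈ E, orderOf (a x),
    Nat.mul_pos hN (Finset.prod_pos fun x _ => (hW (a x)).orderOf_pos), ?_⟩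
  funext x
  by_cases hx : x ∈ E
  · exact orderOf_dvd_iff_pow_eq_one.1 (Dvd.dvd.mul_left (Finset.dvd_prod_of_mem _ hx) N)
  · simp [pow_mul, ha x hx]

lemma isOfFinOrder_of_base_pow {g : W ≀ᵣ A} (hA : IsMulTorsion A)
    (hg : ∀ n : ℕ, (g ^ n).right = 1 → IsOfFinOrder (g ^ n).left) : IsOfFinOrder g := by
  have hr : (g ^ orderOf g.right).right = 1 := by
    rw [← rightHom_eq_right, map_pow, rightHom_eq_right, pow_orderOf_eq_one]
  have := MonoidHom.isOfFinOrder (base : (A → W) →* W ≀ᵣ A) (hg _ hr)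
  rw [base_left_of_right_eq_one hr] at this
  exact this.of_pow (hA g.right).orderOf_pos.ne'

lemma isTorsion_wreath_of_finite [Finite A] (hW : IsMulTorsion W) :
    IsMulTorsion (W ≀ᵣ A) := fun g => by
  have := Fintype.ofFinite A
  exact isOfFinOrder_of_base_pow (fun a => isOfFinOrder_of_finite a) fun n _ =>
    isOfFinOrder_pi hW Finset.univ one_pos fun x hx => absurd (Finset.mem_univ x) hx

/-- A sequence none of whose terms has the form `p i * (p j)⁻¹ * p k` with smaller indices. -/
def IsSparse (p : ℕ → A) : Prop :=
  ∀ n i j k, i < n → j < n → k < n → p n ≠ p i * (p j)⁻¹ * p k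

open scoped Pointwise in
lemma exists_isSparse [Infinite A] : ∃ p : ℕ → A, IsSparse p := by
  classical
  have hnew : ∀ T : Finset A, ∃ x, x ∉ T * T⁻¹ * T := fun T => Infinite.exists_notMem_finset _
  choose new hnew using hnew
  let T : ℕ → Finset A := fun n => Nat.rec ∅ (fun _ t => insert (new t) t) n
  have hT : ∀ n, T (n + 1) = insert (new (T n)) (T n) := fun n => rfl
  have hmono : Monotone T := monotone_nat_of_le_succ fun n => by
    rw [hT]; exact Finset.subset_insert _ _
  have hmem : ∀ {i n}, i < n → new (T i) ∈ T n := fun {i n} h =>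
    hmono (Nat.succ_le_of_lt h) (by rw [Nat.succ_eq_add_one, hT]; exact Finset.mem_insert_self _ _)
  refine ⟨fun n => new (T n), fun n i j k hi hj hk h => hnew (T n) ?_⟩
  change new (T n) = _ at h
  rw [h]
  exact Finset.mul_mem_mul (Finset.mul_mem_mul (hmem hi) (Finset.inv_mem_inv (hmem hj))) (hmem hk)

namespace IsSparse

variable {p : ℕ → A}

lemma injective (hp : IsSparse p) : Function.Injective p := by
  have key : ∀ i n, i < n → p n ≠ p i := fun i n h e => hp n i i i h h h (by simp [e])
  intro i n h
  rcases lt_trichotomy i n with hlt | heq | hgt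
  · exact absurd h.symm (key _ _ hlt)
  · exact heq
  · exact absurd h (key _ _ hgt)

lemma max_le (hp : IsSparse p) {a b c d : ℕ} (hcd : c ≠ d)
    (h : p a * (p b)⁻¹ = p c * (p d)⁻¹) :
    max c d ≤ max a b := by
  by_contra hlt
  rcases lt_or_gt_of_ne hcd with hc | hc
  · refine hp d b a c (by omega) (by omega) hc ?_
    have := congrArg (·⁻¹) h
    simp only [mul_inv_rev, inv_inv] at this
    rw [this, inv_mul_cancel_right]
  · exact hp c a b d (by omega) (by omega) hc (by rw [h, inv_mul_cancel_right])

lemma eq_of_parity (hp : IsSparse p) {a b c d : ℕ} (hac : a % 2 = c % 2)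
    (hbd : b % 2 = d % 2) (hab : a % 2 ≠ b % 2) (h : p a * (p b)⁻¹ = p c * (p d)⁻¹) : a = c := by
  have h1 := hp.max_le (by omega) h
  have h2 := hp.max_le (by omega) h.symm
  by_contra hne
  obtain rfl : b = d := by omega
  exact hne (hp.injective (mul_right_cancel h))

lemma exists_bound (hp : IsSparse p) {g : A} (hg : g ≠ 1) :
    ∃ K, ∀ a b, p a * (p b)⁻¹ = g → a ≤ K := by
  by_cases h : ∃ a b, p a * (p b)⁻¹ = g
  · obtain ⟨a, b, rfl⟩ := h
    refine ⟨max a b, fun c d hcd => ?_⟩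
    have hne : c ≠ d := by
      rintro rfl
      simp at hcd
      exact hg hcd.symm
    exact (le_max_left c d).trans (hp.max_le hne hcd.symm)
  · push Not at h
    exact ⟨0, fun a b hab => absurd hab (h a b)⟩

end IsSparse

lemma exists_of_extend_ne_one {p : ℕ → A} (hp : IsSparse p) {c : ℕ → W} {x : A}
    (hx : Function.extend p c 1 x ≠ 1) : ∃ m, p m = x ∧ c m ≠ 1 := by
  by_cases h : ∃ m, p m = x
  · obtain ⟨m, rfl⟩ := h
    rw [hp.injective.extend_apply] at hx
    exact ⟨m, rfl, hx⟩
  · rw [Function.extend_apply' _ _ _ h] at hx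
    exact absurd rfl hx

/-- The values of the lamp configuration of parity `e` from index `k` onwards. -/
def coeff (h : ℕ → W) (e k : ℕ) : ℕ → W :=
  fun m => if m % 2 = e ∧ 2 * k ≤ m then h (m / 2) else 1

lemma coeff_ne_one {h : ℕ → W} {e k m : ℕ} (hm : coeff h e k m ≠ 1) : m % 2 = e ∧ 2 * k ≤ m := by
  by_contra hn
  exact hm (if_neg hn)

lemma coeff_apply (h : ℕ → W) {e k n : ℕ} (he : e < 2) (hn : k ≤ n) :
    coeff h e k (2 * n + e) = h n := by
  rw [coeff, if_pos (by omega)]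
  congr 1
  omega

/-- The base element of the wreath product with lamps `h n` at `p (2 * n + e)` for `k ≤ n`. -/
noncomputable def lamps (p : ℕ → A) (h : ℕ → W) (e k : ℕ) : W ≀ᵣ A :=
  base (Function.extend p (coeff h e k) 1)

/-- The group generated by `A` and the two lamp configurations starting at `k`. -/
noncomputable def lampGroup (p : ℕ → A) (h : ℕ → W) (k : ℕ) : Subgroup (W ≀ᵣ A) :=
  Subgroup.closure (Set.range (inl : A →* W ≀ᵣ A) ∪ {lamps p h 0 k, lamps p h 1 k})

variable {p : ℕ → A} {h : ℕ → W}

lemma inl_mem (k : ℕ) (x : A) : inl x ∈ lampGroup p h k :=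
  Subgroup.subset_closure (Or.inl ⟨x, rfl⟩)

lemma lamps_mem (k : ℕ) {e : ℕ} (he : e < 2) : lamps p h e k ∈ lampGroup p h k := by
  refine Subgroup.subset_closure (Or.inr ?_)
  interval_cases e <;> simp

open Classical in
lemma inl_conj_mulSingle (x y : A) (w : W) :
    inl x * base (Pi.mulSingle y w) * (inl x)⁻¹ = base (Pi.mulSingle (x * y) w) := by
  rw [inl_conj_base]
  congr 1
  funext z
  simp [Pi.mulSingle_apply, inv_mul_eq_iff_eq_mul]

open Classical in
lemma commutator_mem (hp : IsSparse p) {k i j : ℕ} (hi : k ≤ i) (hj : k ≤ j) :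
    base (Pi.mulSingle (p (2 * i)) ⁅h i, h j⁆) ∈ lampGroup p h k := by
  set g : A := p (2 * i) * (p (2 * j + 1))⁻¹ with hg
  have hmem : ⁅lamps p h 0 k, inl g * lamps p h 1 k * (inl g)⁻¹⁆ ∈ lampGroup p h k := by
    have h0 := lamps_mem (p := p) (h := h) k zero_lt_two
    have h1 := lamps_mem (p := p) (h := h) k one_lt_two
    have hgm := inl_mem (p := p) (h := h) k g
    have h2 := mul_mem (mul_mem hgm h1) (inv_mem hgm)
    rw [commutatorElement_def]
    exact mul_mem (mul_mem (mul_mem h0 h2) (inv_mem h0)) (inv_mem h2)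
  convert hmem using 1
  rw [lamps, lamps, inl_conj_base, ← map_commutatorElement]
  congr 1
  funext x
  simp only [commutatorElement_def, Pi.mul_apply, Pi.inv_apply, Pi.mulSingle_apply]
  split_ifs with hx
  · subst hx
    have : g⁻¹ * p (2 * i) = p (2 * j + 1) := by simp [hg]
    rw [this, hp.injective.extend_apply, hp.injective.extend_apply, coeff_apply h one_lt_two hj]
    have := coeff_apply h zero_lt_two hi
    rw [add_zero] at this
    rw [this]
  · by_cases h0 : Function.extend p (coeff h 0 k) 1 x = 1
    · simp [h0]
    by_cases h1 : Function.extend p (coeff h 1 k) 1 (g⁻¹ * x) = 1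
    · simp [h1]
    obtain ⟨m, hm, hm'⟩ := exists_of_extend_ne_one hp h0
    obtain ⟨l, hl, hl'⟩ := exists_of_extend_ne_one hp h1
    have hmp := coeff_ne_one hm'
    have hlp := coeff_ne_one hl'
    have : m = 2 * i := hp.eq_of_parity (b := l) (d := 2 * j + 1) (by omega) (by omega) (by omega)
      (by rw [hm, hl, ← hg]; group)
    exact absurd (by rw [← hm, this]) hx

open Classical in
/-- Every single lamp with value in the group generated by `h` lies in every `lampGroup`. -/
lemma mulSingle_mem (hp : IsSparse p)
    (hh : ∀ k m, h m ∈ Subgroup.closure {w | ∃ i j, k ≤ i ∧ k ≤ j ∧ w = ⁅h i, h j⁆})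
    (k : ℕ) (x : A) {w : W} (hw : w ∈ Subgroup.closure (Set.range h)) :
    base (Pi.mulSingle x w) ∈ lampGroup p h k := by
  have key : ∀ w, (∃ i j, k ≤ i ∧ k ≤ j ∧ w = ⁅h i, h j⁆) →
      base (Pi.mulSingle x w) ∈ lampGroup p h k := by
    rintro w ⟨i, j, hi, hj, rfl⟩
    have h1 := mul_mem (mul_mem (inl_mem (p := p) (h := h) k (x * (p (2 * i))⁻¹))
      (commutator_mem hp hi hj)) (inv_mem (inl_mem k (x * (p (2 * i))⁻¹)))
    rwa [inl_conj_mulSingle, inv_mul_cancel_right] at h1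
  let φ : W →* W ≀ᵣ A := base.comp (MonoidHom.mulSingle (fun _ : A => W) x)
  have hle : Subgroup.closure {w | ∃ i j, k ≤ i ∧ k ≤ j ∧ w = ⁅h i, h j⁆} ≤
      (lampGroup p h k).comap φ := (Subgroup.closure_le _).2 key
  have hle' : Subgroup.closure (Set.range h) ≤ (lampGroup p h k).comap φ :=
    (Subgroup.closure_le _).2 (by rintro _ ⟨m, rfl⟩; exact hle (hh k m))
  exact hle' hw

open Classical in
lemma lamps_eq_mul (hp : IsSparse p) {e : ℕ} (he : e < 2) (k : ℕ) :
    lamps p h e k = base (Pi.mulSingle (p (2 * k + e)) (h k)) * lamps p h e (k + 1) := by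
  rw [lamps, lamps, ← map_mul]
  congr 1
  funext x
  rw [Pi.mul_apply, Pi.mulSingle_apply]
  by_cases hx : ∃ m, p m = x
  · obtain ⟨m, rfl⟩ := hx
    rw [hp.injective.extend_apply, hp.injective.extend_apply, hp.injective.eq_iff]
    split_ifs with hm
    · subst hm
      rw [coeff_apply h he le_rfl, coeff, if_neg (by omega), mul_one]
    · rw [one_mul, coeff, coeff]
      congr 1
      simp only [eq_iff_iff]
      omega
  · rw [Function.extend_apply' _ _ _ hx, Function.extend_apply' _ _ _ hx,
      if_neg fun h => hx ⟨_, h.symm⟩]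
    simp

/-- All the groups `lampGroup p h k` coincide. -/
lemma lampGroup_eq (hp : IsSparse p)
    (hh : ∀ k m, h m ∈ Subgroup.closure {w | ∃ i j, k ≤ i ∧ k ≤ j ∧ w = ⁅h i, h j⁆}) (k : ℕ) :
    lampGroup p h k = lampGroup p h 0 := by
  classical
  induction k with
  | zero => rfl
  | succ k ih =>
    rw [← ih]
    have hk : h k ∈ Subgroup.closure (Set.range h) := Subgroup.subset_closure ⟨k, rfl⟩
    apply le_antisymm
    · refine (Subgroup.closure_le _).2 ?_
      have : ∀ e < 2, lamps p h e (k + 1) ∈ lampGroup p h k := fun e he => by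
        have h1 := mul_mem (inv_mem (mulSingle_mem hp hh k (p (2 * k + e)) hk))
          (lamps_mem (p := p) (h := h) k he)
        rwa [lamps_eq_mul hp he k, inv_mul_cancel_left] at h1
      rintro _ (⟨x, rfl⟩ | rfl | rfl)
      exacts [inl_mem k x, this 0 zero_lt_two, this 1 one_lt_two]
    · refine (Subgroup.closure_le _).2 ?_
      have : ∀ e < 2, lamps p h e k ∈ lampGroup p h (k + 1) := fun e he => by
        rw [lamps_eq_mul hp he k]
        exact mul_mem (mulSingle_mem hp hh (k + 1) _ hk) (lamps_mem (k + 1) he)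
      rintro _ (⟨x, rfl⟩ | rfl | rfl)
      exacts [inl_mem _ x, this 0 zero_lt_two, this 1 one_lt_two]

/-- The values of elements of the group generated by `A` and `f` are controlled by finitely many
translates of `f`. -/
lemma exists_left_mem_closure {f : A → W} {B : Set (W ≀ᵣ A)}
    (hB : ∀ b ∈ B, ∃ D : Finset A, ∀ x,
      b.left x ∈ Subgroup.closure ((fun d => f (d⁻¹ * x)) '' (D : Set A)))
    {g : W ≀ᵣ A} (hg : g ∈ Subgroup.closure B) : ∃ D : Finset A, ∀ x,
      g.left x ∈ Subgroup.closure ((fun d => f (d⁻¹ * x)) '' (D : Set A)) := by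
  classical
  induction hg using Subgroup.closure_induction with
  | mem b hb => exact hB b hb
  | one => exact ⟨∅, fun x => one_mem _⟩
  | mul a b _ _ iha ihb =>
    obtain ⟨D, hD⟩ := iha
    obtain ⟨E, hE⟩ := ihb
    refine ⟨D ∪ E.image (a.right * ·), fun x => ?_⟩
    rw [mul_left, Pi.mul_apply]
    refine mul_mem (Subgroup.closure_mono (Set.image_mono (by simp)) (hD x))
      (Subgroup.closure_mono ?_ (hE (a.right⁻¹ * x)))
    rintro _ ⟨d, hd, rfl⟩
    refine ⟨a.right * d, by simp at hd ⊢; exact Or.inr hd, ?_⟩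
    simp [mul_assoc]
  | inv a _ iha =>
    obtain ⟨D, hD⟩ := iha
    refine ⟨D.image (a.right⁻¹ * ·), fun x => ?_⟩
    rw [inv_left]
    refine inv_mem (Subgroup.closure_mono ?_ (hD (a.right * x)))
    rintro _ ⟨d, hd, rfl⟩
    refine ⟨a.right⁻¹ * d, by simp at hd ⊢; exact hd, ?_⟩
    simp [mul_assoc]

lemma isOfFinOrder_of_mem_lampGroup (hp : IsSparse p) (hA : IsMulTorsion A)
    (hW : IsMulTorsion W) {N : ℕ} (hN : 0 < N) (hhN : ∀ n, h n ^ N = 1) {g : W ≀ᵣ A}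
    (hg : g ∈ lampGroup p h 0) : IsOfFinOrder g := by
  classical
  set f : A → W := Function.extend p (fun m => h (m / 2)) 1 with hf
  have hlamps : ∀ e x, (lamps p h e 0).left x = 1 ∨ (lamps p h e 0).left x = f x := by
    intro e x
    by_cases hx : ∃ m, p m = x
    · obtain ⟨m, rfl⟩ := hx
      rw [lamps, base_left, hf, hp.injective.extend_apply, hp.injective.extend_apply, coeff]
      split_ifs
      exacts [Or.inr rfl, Or.inl rfl]
    · rw [lamps, base_left, Function.extend_apply' _ _ _ hx]
      exact Or.inl rfl
  have hB : ∀ b ∈ Set.range (inl : A →* W ≀ᵣ A) ∪ {lamps p h 0 0, lamps p h 1 0},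
      ∃ D : Finset A, ∀ x,
        b.left x ∈ Subgroup.closure ((fun d => f (d⁻¹ * x)) '' (D : Set A)) := by
    have key : ∀ e, ∃ D : Finset A, ∀ x, (lamps p h e 0).left x ∈
        Subgroup.closure ((fun d => f (d⁻¹ * x)) '' (D : Set A)) := fun e => by
      refine ⟨{1}, fun x => ?_⟩
      rcases hlamps e x with hx | hx
      · rw [hx]; exact one_mem _
      · rw [hx]; exact Subgroup.subset_closure ⟨1, by simp, by simp⟩
    rintro _ (⟨x, rfl⟩ | rfl | rfl)
    exacts [⟨∅, fun y => one_mem _⟩, key 0, key 1]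
  refine isOfFinOrder_of_base_pow hA fun n _ => ?_
  obtain ⟨D, hD⟩ := exists_left_mem_closure hB (pow_mem hg n)
  have hK : ∀ d d' : A, ∃ K, d ≠ d' → ∀ a b, p a * (p b)⁻¹ = d⁻¹ * d' → a ≤ K := by
    intro d d'
    by_cases hd : d = d'
    · exact ⟨0, fun h => absurd hd h⟩
    · obtain ⟨K, hK⟩ := hp.exists_bound (g := d⁻¹ * d') (by rwa [Ne, inv_mul_eq_one])
      exact ⟨K, fun _ => hK⟩
  choose K hK using hK
  let E : Finset A := (D ×ˢ D).biUnion fun q =>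
    (Finset.range (K q.1 q.2 + 1)).image fun a => q.1 * p a
  refine isOfFinOrder_pi hW E hN fun x hx => ?_
  have hsub : ∃ w : W, w ^ N = 1 ∧
      (fun d => f (d⁻¹ * x)) '' (D : Set A) ⊆ Subgroup.zpowers w := by
    by_cases hall : ∀ d ∈ D, f (d⁻¹ * x) = 1
    · refine ⟨1, one_pow _, ?_⟩
      rintro _ ⟨d, hd, rfl⟩
      simp [hall d hd]
    · push Not at hall
      obtain ⟨d, hd, hne⟩ := hall
      obtain ⟨a, ha, -⟩ := exists_of_extend_ne_one hp hne
      refine ⟨f (d⁻¹ * x), ?_, ?_⟩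
      · rw [hf, ← ha, hp.injective.extend_apply]
        exact hhN _
      rintro _ ⟨d', hd', rfl⟩
      change f (d'⁻¹ * x) ∈ Subgroup.zpowers _
      by_cases hdd : d = d'
      · rw [hdd]; exact Subgroup.mem_zpowers _
      by_cases h1 : f (d'⁻¹ * x) = 1
      · rw [h1]; exact one_mem _
      obtain ⟨b, hb, -⟩ := exists_of_extend_ne_one hp h1
      refine absurd ?_ hx
      simp only [E, Finset.mem_biUnion, Finset.mem_product, Finset.mem_image, Finset.mem_range]
      refine ⟨(d, d'), ⟨hd, hd'⟩, a, ?_, by rw [ha]; group⟩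
      exact Nat.lt_succ_of_le (hK d d' hdd a b (by rw [ha, hb]; group))
  obtain ⟨w, hw, hsub⟩ := hsub
  obtain ⟨z, hz⟩ := Subgroup.mem_zpowers_iff.1 ((Subgroup.closure_le _).2 hsub (hD x))
  rw [← hz, ← zpow_natCast, ← zpow_mul, mul_comm, zpow_mul, zpow_natCast, hw, one_zpow]

/-- Conjugates of the late lamp configurations by a finite subset of `A` commute. -/
lemma exists_commute_conj_lamps (hp : IsSparse p) (F : Finset A) : ∃ k, ∀ c ∈ F, ∀ c' ∈ F,
    ∀ e < 2, ∀ e' < 2, Commute ((inl c)⁻¹ * lamps p h e k * inl c)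
      ((inl c')⁻¹ * lamps p h e' k * inl c') := by
  classical
  have hK : ∀ d d' : A, ∃ K, d ≠ d' → ∀ a b, p a * (p b)⁻¹ = d * d'⁻¹ → a ≤ K := by
    intro d d'
    by_cases hd : d = d'
    · exact ⟨0, fun h => absurd hd h⟩
    · obtain ⟨K, hK⟩ := hp.exists_bound (g := d * d'⁻¹) (by rwa [Ne, mul_inv_eq_one])
      exact ⟨K, fun _ => hK⟩
  choose K hK using hK
  refine ⟨(F ×ˢ F).sup (fun q => K q.1 q.2) + 1, fun c hc c' hc' e he e' he' => ?_⟩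
  set k := (F ×ˢ F).sup (fun q => K q.1 q.2) + 1 with hk
  have hconj : ∀ (x : A) (a : A → W), (inl x)⁻¹ * base a * inl x = base fun y => a (x * y) := by
    intro x a
    simpa using inl_conj_base x⁻¹ a
  by_cases heq : c = c' ∧ e = e'
  · rw [heq.1, heq.2]
  rw [lamps, lamps, hconj, hconj]
  refine Commute.map (f := base) ?_
  funext x
  simp only [Pi.mul_apply]
  by_cases h0 : Function.extend p (coeff h e k) 1 (c * x) = 1
  · simp [h0]
  by_cases h1 : Function.extend p (coeff h e' k) 1 (c' * x) = 1
  · simp [h1]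
  obtain ⟨m, hm, hm'⟩ := exists_of_extend_ne_one hp h0
  obtain ⟨l, hl, hl'⟩ := exists_of_extend_ne_one hp h1
  have hmp := coeff_ne_one hm'
  have hlp := coeff_ne_one hl'
  by_cases hcc : c = c'
  · refine absurd ⟨hcc, ?_⟩ heq
    have : m = l := hp.injective (by rw [hm, hl, hcc])
    omega
  · have h2 := hK c c' hcc m l (by rw [hm, hl]; group)
    have h3 : K c c' ≤ (F ×ˢ F).sup (fun q => K q.1 q.2) :=
      Finset.le_sup (f := fun q : A × A => K q.1 q.2) (b := (c, c')) (Finset.mk_mem_product hc hc')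
    omega

end LampExtension

namespace OrientedCayley

/-- An orientation pulls back along a map intertwining right translations. -/
lemma not_unitarizable_of_map {G H : Type} [Group G] [Group H] (s : ℕ → H) (C : ℕ)
    (o : H × ℕ → H × Fin C) (ho : Function.Injective o)
    (hmem : ∀ x n, (o (x, n)).1 = x ∨ (o (x, n)).1 = x * s n) (Θ : G → H) (t : ℕ → G)
    (hΘ : ∀ g n, Θ (g * t n) = Θ g * s n) : ¬ Unitarizable G := by
  classical
  let o' : G × ℕ → G × Fin C := fun q =>
    (if (o (Θ q.1, q.2)).1 = Θ q.1 then q.1 else q.1 * t q.2, (o (Θ q.1, q.2)).2)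
  have hΘo : ∀ q, Θ (o' q).1 = (o (Θ q.1, q.2)).1 := by
    intro q
    by_cases h : (o (Θ q.1, q.2)).1 = Θ q.1
    · simp only [o', if_pos h]
      exact h.symm
    · simp only [o', if_neg h, hΘ]
      exact ((hmem _ _).resolve_left h).symm
  refine not_unitarizable_of_orientation t C o' ?_ fun x n => ?_
  · rintro ⟨g, n⟩ ⟨g', n'⟩ h
    have h1 : o (Θ g, n) = o (Θ g', n') := by
      refine Prod.ext ?_ (congrArg (fun q : G × Fin C => q.2) h)
      rw [← hΘo (g, n), ← hΘo (g', n'), h]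
    obtain ⟨hg, rfl⟩ := Prod.mk.inj (ho h1)
    have h2 := congrArg Prod.fst h
    simp only [o', ← hg] at h2
    split_ifs at h2
    · rw [h2]
    · rw [mul_right_cancel h2]
  · simp only [o']
    split_ifs
    exacts [Or.inl rfl, Or.inr rfl]

end OrientedCayley

namespace InducedVector

open OrientedCayley

lemma leftRegular_sub {A : Type*} [Group A] (s : A) (u v : lp (fun _ : A => ℂ) 2) :
    leftRegular s (u - v) = leftRegular s u - leftRegular s v := rfl

lemma continuous_leftRegular {A : Type} [Group A] (s : A) :
    Continuous (leftRegular s : lp (fun _ : A => ℂ) 2 → lp (fun _ : A => ℂ) 2) := by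
  refine (Isometry.of_dist_eq fun u v => ?_).continuous
  rw [dist_eq_norm, dist_eq_norm, ← leftRegular_sub, norm_leftRegular]

/-- Almost invariant vectors may be chosen with finite support. -/
lemma exists_finite_support {A : Type} [Group A] (S : Finset A) {ε : ℝ}
    (u : lp (fun _ : A => ℂ) 2) (hu : ∀ s ∈ S, ‖leftRegular s u - u‖ < ε * ‖u‖) (hu0 : u ≠ 0) :
    ∃ (F : Finset A) (v : lp (fun _ : A => ℂ) 2), (∀ x ∉ F, v x = 0) ∧ v ≠ 0 ∧
      ∀ s ∈ S, ‖leftRegular s v - v‖ < ε * ‖v‖ := by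
  classical
  have hsum := lp.hasSum_single (p := 2) ENNReal.ofNat_ne_top u
  have hopen : IsOpen {v : lp (fun _ : A => ℂ) 2 |
      v ≠ 0 ∧ ∀ s ∈ S, ‖leftRegular s v - v‖ < ε * ‖v‖} := by
    refine isOpen_ne.inter ?_
    have : {v : lp (fun _ : A => ℂ) 2 | ∀ s ∈ S, ‖leftRegular s v - v‖ < ε * ‖v‖}
        = ⋂ s ∈ S, {v | ‖leftRegular s v - v‖ < ε * ‖v‖} := by
      ext; simp
    change IsOpen {v : lp (fun _ : A => ℂ) 2 | ∀ s ∈ S, ‖leftRegular s v - v‖ < ε * ‖v‖}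
    rw [this]
    exact isOpen_biInter_finset fun s _ => isOpen_lt
      ((continuous_leftRegular s).sub continuous_id).norm (continuous_const.mul continuous_norm)
  obtain ⟨F, hF⟩ := (hsum.eventually (hopen.mem_nhds ⟨hu0, hu⟩)).exists
  refine ⟨F, _, fun x hx => ?_, hF.1, hF.2⟩
  rw [lp.coeFn_sum, Finset.sum_apply]
  refine Finset.sum_eq_zero fun i hi => ?_
  rw [lp.coeFn_single, Pi.single_eq_of_ne]
  rintro rfl
  exact hx hi

variable {G A : Type} [Group G] [Group A] (r : G →* A) (ι : A →* G) (P : Subgroup G)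

open Classical in
/-- The function `u ∘ r` restricted to the union of the cosets `ι a * P`. -/
noncomputable def inducedFun (u : A → ℂ) (g : G) : ℂ :=
  if (ι (r g))⁻¹ * g ∈ P then u (r g) else 0

variable {r ι P}

lemma hasSum_fst {X Y : Type*} [Finite Y] {φ : X → ℝ} {c : ℝ} (h0 : ∀ x, 0 ≤ φ x)
    (hφ : HasSum φ c) : HasSum (fun q : X × Y => φ q.1) (c * Nat.card Y) := by
  have := Fintype.ofFinite Y
  have h1 : HasSum (fun _ : Y => (1 : ℝ)) (Nat.card Y) := by
    simpa using hasSum_fintype fun _ : Y => (1 : ℝ)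
  have hsum : Summable fun q : X × Y => φ q.1 * (1 : ℝ) :=
    hφ.summable.mul_of_nonneg h1.summable h0 fun _ => zero_le_one
  simpa using hφ.mul h1 hsum

lemma hasSum_inducedFun [Finite P] (hrι : ∀ a, r (ι a) = a) (hP : ∀ x ∈ P, r x = 1)
    (u : lp (fun _ : A => ℂ) 2) :
    HasSum (fun g => ‖inducedFun r ι P u g‖ ^ (2 : ENNReal).toReal)
      (‖u‖ ^ (2 : ENNReal).toReal * Nat.card P) := by
  let j : A × P → G := fun q => ι q.1 * q.2
  have hr : ∀ q, r (j q) = q.1 := fun q => by simp [j, hrι, hP]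
  have hj : Function.Injective j := by
    intro q q' h
    have h1 : q.1 = q'.1 := by rw [← hr q, ← hr q', h]
    refine Prod.ext h1 (Subtype.ext ?_)
    simpa [j, h1] using h
  have h0 : ∀ x ∉ Set.range j, ‖inducedFun r ι P u x‖ ^ (2 : ENNReal).toReal = 0 := by
    intro x hx
    rw [inducedFun, if_neg]
    · simp
    · exact fun h => hx ⟨(r x, ⟨_, h⟩), by simp [j]⟩
  rw [← hj.hasSum_iff h0]
  have hcomp : (fun g => ‖inducedFun r ι P u g‖ ^ (2 : ENNReal).toReal) ∘ j
      = fun q : A × P => ‖u q.1‖ ^ (2 : ENNReal).toReal := by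
    funext q
    have hq : (ι (r (j q)))⁻¹ * j q ∈ P := by rw [hr]; simp [j]
    simp only [Function.comp_apply, inducedFun, if_pos hq]
    rw [hr]
  rw [hcomp]
  exact hasSum_fst (fun a => Real.rpow_nonneg (norm_nonneg _) _) (lp.hasSum_norm (by norm_num) u)

lemma exists_invariant_vector [Finite P] (hrι : ∀ a, r (ι a) = a) (hP : ∀ x ∈ P, r x = 1)
    (S F : Finset A) {ε : ℝ} {u : lp (fun _ : A => ℂ) 2} (hF : ∀ x ∉ F, u x = 0) (hu0 : u ≠ 0)
    (hu : ∀ s ∈ S, ‖leftRegular s u - u‖ < ε * ‖u‖) (Φ : Set G) (hΦ : ∀ f ∈ Φ, r f = 1)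
    (hΦP : ∀ f ∈ Φ, ∀ c ∈ F, (ι c)⁻¹ * f * ι c ∈ P) (hε : 0 < ε) :
    ∃ v : lp (fun _ : G => ℂ) 2, ‖v‖ = 1 ∧ (∀ s ∈ S, ‖leftRegular (ι s) v - v‖ < ε) ∧
      ∀ f ∈ Φ, ‖leftRegular f v - v‖ < ε := by
  classical
  have h2 : 0 < (2 : ENNReal).toReal := by norm_num
  let V : lp (fun _ : A => ℂ) 2 → lp (fun _ : G => ℂ) 2 := fun w =>
    ⟨inducedFun r ι P w, memℓp_gen (hasSum_inducedFun hrι hP w).summable⟩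
  have hV : ∀ w g, V w g = if (ι (r g))⁻¹ * g ∈ P then w (r g) else 0 := fun w g => rfl
  set c : ℝ := (Nat.card P : ℝ) ^ (1 / (2 : ENNReal).toReal) with hc
  have hc0 : 0 < c := Real.rpow_pos_of_pos (by exact_mod_cast Nat.card_pos) _
  have hnorm : ∀ w, ‖V w‖ = ‖w‖ * c := by
    intro w
    rw [lp.norm_eq_tsum_rpow h2, hc, (hasSum_inducedFun hrι hP w).tsum_eq,
      Real.mul_rpow (by positivity) (by positivity), ← Real.rpow_mul (norm_nonneg _),
      mul_one_div_cancel h2.ne', Real.rpow_one]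
  have hshift : ∀ s, leftRegular (ι s) (V u) - V u = V (leftRegular s u - u) := by
    intro s
    ext g
    rw [lp.coeFn_sub, Pi.sub_apply, leftRegular_apply, hV, hV, hV, lp.coeFn_sub, Pi.sub_apply,
      leftRegular_apply]
    have h1 : (ι (r ((ι s)⁻¹ * g)))⁻¹ * ((ι s)⁻¹ * g) = (ι (r g))⁻¹ * g := by
      simp [hrι, mul_assoc]
    rw [h1]
    split_ifs <;> simp [hrι]
  have hinv : ∀ f ∈ Φ, leftRegular f (V u) = V u := by
    intro f hf
    ext g
    rw [leftRegular_apply, hV, hV]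
    have h1 : r (f⁻¹ * g) = r g := by simp [hΦ f hf]
    rw [h1]
    by_cases hg : r g ∈ F
    · have h3 : (ι (r g))⁻¹ * (f⁻¹ * g) =
          ((ι (r g))⁻¹ * f * ι (r g))⁻¹ * ((ι (r g))⁻¹ * g) := by group
      rw [h3, Subgroup.mul_mem_cancel_left _ (inv_mem (hΦP f hf _ hg))]
    · simp [hF _ hg]
  have hne : ‖V u‖ ≠ 0 := by
    rw [hnorm]; exact mul_ne_zero (norm_ne_zero_iff.2 hu0) hc0.ne'
  have hscale : ∀ g, ‖leftRegular g (((‖V u‖⁻¹ : ℝ) : ℂ) • V u) - ((‖V u‖⁻¹ : ℝ) : ℂ) • V u‖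
      = ‖V u‖⁻¹ * ‖leftRegular g (V u) - V u‖ := by
    intro g
    have : leftRegular g (((‖V u‖⁻¹ : ℝ) : ℂ) • V u) - ((‖V u‖⁻¹ : ℝ) : ℂ) • V u
        = ((‖V u‖⁻¹ : ℝ) : ℂ) • (leftRegular g (V u) - V u) := by
      rw [smul_sub]; rfl
    rw [this, norm_smul, Complex.norm_real, norm_inv, norm_norm]
  refine ⟨((‖V u‖⁻¹ : ℝ) : ℂ) • V u, ?_, fun s hs => ?_, fun f hf => ?_⟩
  · rw [norm_smul, Complex.norm_real, norm_inv, norm_norm, inv_mul_cancel₀ hne]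
  · have hpos : 0 < ‖V u‖ := lt_of_le_of_ne (norm_nonneg _) hne.symm
    rw [hscale, inv_mul_lt_iff₀ hpos, hshift, hnorm, hnorm, mul_right_comm]
    nlinarith [hu s hs]
  · rw [hscale, hinv f hf, sub_self, norm_zero, mul_zero]
    exact hε

end InducedVector

namespace LampExtension

open RegularWreathProduct
open scoped commutatorElement

lemma commutator_alternatingGroup_five : commutator (alternatingGroup (Fin 5)) = ⊤ := by
  rcases (inferInstance : (commutator (alternatingGroup (Fin 5))).Normal).eq_bot_or_eq_top
    with h | h
  · exfalso
    have hcomm : ∀ x y : alternatingGroup (Fin 5), x * y = y * x := by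
      intro x y
      rw [← commutatorElement_eq_one_iff_mul_comm, ← Subgroup.mem_bot, ← h, commutator_eq_closure]
      exact Subgroup.subset_closure ⟨x, y, rfl⟩
    have := hcomm ⟨Equiv.swap 0 1 * Equiv.swap 1 2, Equiv.Perm.mem_alternatingGroup.2 (by decide)⟩
      ⟨Equiv.swap 0 1 * Equiv.swap 1 3, Equiv.Perm.mem_alternatingGroup.2 (by decide)⟩
    revert this
    decide
  · exact h

/-- The copy of `Q` in `H ≀ᵣ Q` obtained by conjugating with the element `t` of the base group
placed at the identity. -/
noncomputable def twist {H Q : Type*} [Group H] [Group Q] [DecidableEq Q] (t : H) :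
    Q →* H ≀ᵣ Q :=
  (MulAut.conj (base (Pi.mulSingle 1 t) : H ≀ᵣ Q)).toMonoidHom.comp inl

lemma twist_left_one {H Q : Type*} [Group H] [Group Q] [DecidableEq Q] (t : H) {σ : Q}
    (hσ : σ ≠ 1) : (twist t σ * (twist 1 σ)⁻¹).left 1 = t := by
  simp [twist, Pi.mulSingle_apply, hσ]

lemma twist_right {H Q : Type*} [Group H] [Group Q] [DecidableEq Q] (t : H) (σ : Q) :
    (twist t σ * (twist 1 σ)⁻¹).right = 1 := by
  simp [twist]

lemma exists_lamp_values {H : Type} [Group H] (hH : IsMulTorsion H) (s : ℕ → H) :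
    ∃ (W : Type) (_ : Group W) (h : ℕ → W) (y : ℕ → W) (θ : W → H) (N : ℕ), IsMulTorsion W ∧
      0 < N ∧ (∀ n, h n ^ N = 1) ∧
      (∀ k m, h m ∈ Subgroup.closure {w | ∃ i j, k ≤ i ∧ k ≤ j ∧ w = ⁅h i, h j⁆}) ∧
      (∀ n, y n ∈ Subgroup.closure (Set.range h)) ∧ ∀ w n, θ (w * y n) = θ w * s n := by
  classical
  let Q := alternatingGroup (Fin 5)
  obtain ⟨e, he⟩ := exists_surjective_nat (ℕ × Q × ℕ)
  let s' : ℕ → H := fun n => Nat.casesOn n 1 s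
  let h : ℕ → H ≀ᵣ Q := fun n => twist (s' (e n).1) (e n).2.1
  have hhit : ∀ m (σ : Q) k, ∃ i, k ≤ i ∧ h i = twist (s' m) σ := by
    intro m σ k
    have hinf : {i | (e i).1 = m ∧ (e i).2.1 = σ}.Infinite := by
      intro hfin
      refine Set.infinite_univ ((hfin.image fun i => (e i).2.2).subset fun j _ => ?_)
      obtain ⟨i, hi⟩ := he (m, σ, j)
      exact ⟨i, by simp [hi], by simp [hi]⟩
    obtain ⟨i, ⟨h1, h2⟩, hi⟩ := hinf.exists_gt k
    exact ⟨i, hi.le, by simp only [h, h1, h2]⟩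
  obtain ⟨σ, hσ⟩ := exists_ne (1 : Q)
  have hmem : ∀ m (σ : Q), twist (s' m) σ ∈ Subgroup.closure (Set.range h) := by
    intro m σ
    obtain ⟨i, -, hi⟩ := hhit m σ 0
    exact Subgroup.subset_closure ⟨i, hi⟩
  refine ⟨H ≀ᵣ Q, inferInstance, h, fun n => twist (s n) σ * (twist 1 σ)⁻¹,
    fun w => w.left w.right, Nat.card Q, isTorsion_wreath_of_finite hH, Nat.card_pos,
    fun n => ?_, fun k m => ?_, fun n => ?_, fun w n => ?_⟩
  · rw [← map_pow, pow_card_eq_one', map_one]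
  · have hle : (⊤ : Subgroup Q) ≤ (Subgroup.closure {w | ∃ i j, k ≤ i ∧ k ≤ j ∧
        w = ⁅h i, h j⁆}).comap (twist (s' (e m).1)) := by
      rw [← commutator_alternatingGroup_five, commutator_eq_closure, Subgroup.closure_le]
      rintro _ ⟨a, b, rfl⟩
      obtain ⟨i, hi, hi'⟩ := hhit (e m).1 a k
      obtain ⟨j, hj, hj'⟩ := hhit (e m).1 b k
      refine Subgroup.subset_closure ⟨i, j, hi, hj, ?_⟩
      rw [map_commutatorElement, hi', hj']
    exact hle (Subgroup.mem_top (e m).2.1)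
  · exact mul_mem (hmem (n + 1) σ) (inv_mem (hmem 0 σ))
  · have h1 := twist_left_one (Q := Q) (s n) hσ
    have h2 := twist_right (s n) σ
    change (w * (twist (s n) σ * (twist 1 σ)⁻¹)).left
      (w * (twist (s n) σ * (twist 1 σ)⁻¹)).right = _
    rw [mul_right, h2, mul_one, mul_left, Pi.mul_apply, inv_mul_cancel, h1]

/-- Finitely many commuting elements of a torsion group generate a finite subgroup. -/
lemma finite_closure_of_commute {G : Type*} [Group G] (hG : IsMulTorsion G) (B : Finset G)
    (hB : ∀ x ∈ B, ∀ y ∈ B, Commute x y) : Finite (Subgroup.closure (B : Set G)) := by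
  have hcomm := Subgroup.isMulCommutative_closure (k := (B : Set G)) hB
  have : Group.FG (Subgroup.closure (B : Set G)) := Group.closure_finset_fg B
  exact @CommGroup.finite_of_fg_isMulTorsion _ (IsMulCommutative.instCommGroup ..)
    this (hG.subgroup _)

end LampExtension

open LampExtension RegularWreathProduct in
/-- There exists a finitely generated torsion group that is not unitarizable (hence has
no non-abelian free subgroup) and is weakly amenable: for every `ε > 0` there are a
finite generating set `X` and a unit vector `u ∈ ℓ²(G)` with `‖λ(x)u - u‖ < ε` for all
`x ∈ X`. -/
theorem exists_fg_torsion_not_unitarizable_weakly_amenable :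
    ∃ (G : Type) (_ : Group G), Group.FG G ∧ Monoid.IsTorsion G ∧ ¬ Unitarizable G ∧
      ∀ ε : ℝ, 0 < ε → ∃ X : Finset G, Subgroup.closure (X : Set G) = ⊤ ∧
        ∃ u : lp (fun _ : G => ℂ) 2, ‖u‖ = 1 ∧
          ∀ x ∈ X, ‖leftRegular x u - u‖ < ε := by
  classical
  obtain ⟨H, _, s, o, hH, ho, hmem⟩ := FoxChain.exists_torsion_orientable
  obtain ⟨A, _, S, hS, hA, _, hamen⟩ := Grigorchuk.exists_infinite_torsion_amenable
  obtain ⟨W, _, h, y, θ, N, hW, hN, hhN, hh, hy, hθ⟩ := exists_lamp_values hH s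
  obtain ⟨p, hp⟩ := exists_isSparse (A := A)
  let K : Subgroup (W ≀ᵣ A) := lampGroup p h 0
  have hlamps : ∀ k, ∀ e < 2, lamps p h e k ∈ K := fun k e he =>
    (lampGroup_eq hp hh k).le (lamps_mem k he)
  let ι : A →* K := (inl : A →* W ≀ᵣ A).codRestrict K (inl_mem 0)
  let r : K →* A := rightHom.comp K.subtype
  let f : ℕ → Fin 2 → K := fun k e => ⟨lamps p h e k, hlamps k e e.2⟩
  have hrι : ∀ a, r (ι a) = a := fun a => rfl
  have hrf : ∀ k e, r (f k e) = 1 := fun k e => rfl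
  let X : ℕ → Finset K := fun k => S.image ι ∪ Finset.univ.image (f k)
  have hX : ∀ k, Subgroup.closure (X k : Set K) = ⊤ := by
    intro k
    have hι : ∀ a, ι a ∈ Subgroup.closure (X k : Set K) := by
      intro a
      have hle : (⊤ : Subgroup A) ≤ (Subgroup.closure (X k : Set K)).comap ι := by
        rw [← hS, Subgroup.closure_le]
        intro s hs
        exact Subgroup.subset_closure (by
          simp only [X, Finset.coe_union, Finset.coe_image]
          exact Or.inl ⟨s, hs, rfl⟩)
      exact hle (Subgroup.mem_top a)
    have hf : ∀ e, f k e ∈ Subgroup.closure (X k : Set K) := fun e =>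
      Subgroup.subset_closure (by simp [X])
    have hle : K ≤ (Subgroup.closure (X k : Set K)).map K.subtype := by
      change lampGroup p h 0 ≤ _
      rw [← lampGroup_eq hp hh k]
      refine (Subgroup.closure_le _).2 ?_
      rintro _ (⟨a, rfl⟩ | rfl | rfl)
      exacts [⟨ι a, hι a, rfl⟩, ⟨f k 0, hf 0, rfl⟩, ⟨f k 1, hf 1, rfl⟩]
    refine eq_top_iff.2 fun g _ => ?_
    obtain ⟨g', hg', hgg⟩ := hle g.2
    rwa [Subtype.ext hgg] at hg'
  have htors : IsMulTorsion K := fun g =>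
    Submonoid.isOfFinOrder_coe.1 (isOfFinOrder_of_mem_lampGroup hp hA hW hN hhN g.2)
  refine ⟨K, inferInstance, ⟨⟨X 0, hX 0⟩⟩, htors, ?_, fun ε hε => ?_⟩
  · refine OrientedCayley.not_unitarizable_of_map s 2 o ho hmem
      (fun g => θ ((g : W ≀ᵣ A).left (g : W ≀ᵣ A).right))
      (fun n => ⟨base (Pi.mulSingle 1 (y n)), mulSingle_mem hp hh 0 1 (hy n)⟩) fun g n => ?_
    rw [← hθ]
    congr 1
    simp
  · obtain ⟨u, hu, hus⟩ := hamen ε hε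
    have hu0 : u ≠ 0 := norm_ne_zero_iff.1 (by rw [hu]; exact one_ne_zero)
    obtain ⟨F, v, hF, hv0, hv⟩ := InducedVector.exists_finite_support S (ε := ε) u
      (by simpa [hu] using hus) hu0
    obtain ⟨k, hk⟩ := exists_commute_conj_lamps (h := h) hp F
    let B : Finset K := (F ×ˢ Finset.univ).image fun q => (ι q.1)⁻¹ * f k q.2 * ι q.1
    have hB : ∀ x ∈ B, ∀ y ∈ B, Commute x y := by
      intro x hx y hy
      simp only [B, Finset.mem_image, Finset.mem_product] at hx hy
      obtain ⟨⟨c, e⟩, ⟨hc, -⟩, rfl⟩ := hx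
      obtain ⟨⟨c', e'⟩, ⟨hc', -⟩, rfl⟩ := hy
      exact Subtype.ext (hk c hc c' hc' e e.2 e' e'.2)
    have := finite_closure_of_commute htors B hB
    have hP : ∀ x ∈ Subgroup.closure (B : Set K), r x = 1 := by
      intro x hx
      have hle : Subgroup.closure (B : Set K) ≤ r.ker := by
        refine (Subgroup.closure_le _).2 fun b hb => ?_
        simp only [B, Finset.coe_image, Set.mem_image] at hb
        obtain ⟨q, -, rfl⟩ := hb
        simp [MonoidHom.mem_ker, hrf]
      exact hle hx
    obtain ⟨w, hw, hw1, hw2⟩ := InducedVector.exists_invariant_vector hrι hP S F hF hv0 hv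
      (Set.range (f k)) (by rintro _ ⟨e, rfl⟩; exact hrf k e)
      (by
        rintro _ ⟨e, rfl⟩ c hc
        exact Subgroup.subset_closure
          (Finset.mem_coe.2 (Finset.mem_image.2 ⟨(c, e), by simp [hc], rfl⟩)))
      hε
    refine ⟨X k, hX k, w, hw, fun x hx => ?_⟩
    simp only [X, Finset.mem_union, Finset.mem_image, Finset.mem_univ, true_and] at hx
    rcases hx with ⟨s, hs, rfl⟩ | ⟨e, rfl⟩
    exacts [hw1 s hs, hw2 _ ⟨e, rfl⟩]
end

section
/- (Day–Dixmier) Every amenable group is unitarizable: if a group G admits a left-invariant mean on the space of bounded complex-valued functions on G, then every uniformly bounded representation of G on a complex Hilbert space is unitarizable. -/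
open scoped ENNReal

/-- Left translation action of `G` on `ℓ∞(G)` (bounded real-valued functions on `G`):
`(g · f)(h) = f(g⁻¹ h)`. -/
noncomputable def leftTranslate {G : Type*} [Group G] (g : G)
    (f : lp (fun _ : G => ℝ) ∞) : lp (fun _ : G => ℝ) ∞ :=
  ⟨fun h => f (g⁻¹ * h), by
    have hf : BddAbove (Set.range fun i : G => ‖f i‖) :=
      memℓp_infty_iff.mp (lp.memℓp f)
    refine memℓp_infty ?_
    have : (Set.range fun h : G => ‖f (g⁻¹ * h)‖) = Set.range fun i : G => ‖f i‖ := by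
      rw [show (fun h : G => ‖f (g⁻¹ * h)‖) =
        (fun i : G => ‖f i‖) ∘ (Equiv.mulLeft g⁻¹) from rfl]
      exact Function.Surjective.range_comp (Equiv.mulLeft g⁻¹).surjective _
    rwa [this]⟩

/-- A group `G` is *amenable* if there is a left-invariant mean on `ℓ∞(G)`: a linear
functional `m` with `m 1 = 1`, `m f ≥ 0` for pointwise nonnegative `f`, and
`m (g · f) = m f` for every `g ∈ G`. -/
def IsAmenable (G : Type*) [Group G] : Prop :=
  ∃ m : lp (fun _ : G => ℝ) ∞ →ₗ[ℝ] ℝ,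
    m 1 = 1 ∧ (∀ f, (∀ h : G, 0 ≤ f h) → 0 ≤ m f) ∧
      ∀ (g : G) (f), m (leftTranslate g f) = m f

/-- A positive-definite bounded operator on a complex Hilbert space is of the form `T† T` with `T`
invertible. -/
theorem exists_continuousLinearEquiv_norm_sq_eq {E : Type*} [NormedAddCommGroup E]
    [InnerProductSpace ℂ E] [CompleteSpace E] (A : E →L[ℂ] E)
    (him : ∀ x, (inner ℂ (A x) x).im = 0) {c : ℝ} (hc : 0 < c)
    (hre : ∀ x, c * ‖x‖ ^ 2 ≤ (inner ℂ (A x) x).re) :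
    ∃ T : E ≃L[ℂ] E, ∀ x, ‖T x‖ ^ 2 = (inner ℂ (A x) x).re := by
  have hle : algebraMap ℝ (E →L[ℂ] E) c ≤ A := by
    rw [ContinuousLinearMap.le_def, ContinuousLinearMap.isPositive_iff_complex]
    intro x
    have hx : inner ℂ ((A - algebraMap ℝ (E →L[ℂ] E) c) x) x
        = (((inner ℂ (A x) x).re - c * ‖x‖ ^ 2 : ℝ) : ℂ) := by
      rw [sub_apply, inner_sub_left, Algebra.algebraMap_eq_smul_one]
      apply Complex.ext
      · simp [← Complex.coe_smul, inner_smul_left, inner_self_eq_norm_sq_to_K, ← Complex.ofReal_pow]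
      · simp [← Complex.coe_smul, inner_smul_left, inner_self_eq_norm_sq_to_K, ← Complex.ofReal_pow,
          him x]
    rw [hx]
    exact ⟨rfl, sub_nonneg.2 (hre x)⟩
  have hc_pos : IsStrictlyPositive (algebraMap ℝ (E →L[ℂ] E) c) := by
    rw [IsStrictlyPositive.iff_of_unital]
    exact ⟨algebraMap_nonneg _ hc.le, hc.ne'.isUnit.map _⟩
  have hA : IsStrictlyPositive A := hc_pos.of_le hle
  obtain ⟨u, hu⟩ := (CFC.isUnit_sqrt_iff A hA.nonneg).2 hA.isUnit
  refine ⟨ContinuousLinearEquiv.ofUnit u, fun x => ?_⟩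
  have hT : ContinuousLinearEquiv.ofUnit u x = CFC.sqrt A x := by rw [← hu]; rfl
  have hadj : ContinuousLinearMap.adjoint (CFC.sqrt A) = CFC.sqrt A :=
    (CFC.sqrt_nonneg A).isSelfAdjoint
  have hsq : CFC.sqrt A (CFC.sqrt A x) = A x :=
    DFunLike.congr_fun (CFC.sqrt_mul_sqrt_self A hA.nonneg) x
  rw [hT, ← hsq, ← inner_self_eq_norm_sq (𝕜 := ℂ), ← ContinuousLinearMap.adjoint_inner_left, hadj]
  rfl

/-- The pointwise real part, as a real-linear map on bounded functions. -/
noncomputable def lpInftyRe (G : Type*) :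
    lp (fun _ : G => ℂ) ∞ →ₗ[ℝ] lp (fun _ : G => ℝ) ∞ where
  toFun f := ⟨fun h => (f h).re, memℓp_infty ⟨‖f‖, by
    rintro _ ⟨h, rfl⟩
    exact (Complex.abs_re_le_norm _).trans (lp.norm_apply_le_norm ENNReal.top_ne_zero f h)⟩⟩
  map_add' f g := rfl
  map_smul' c f := by ext; simp

@[simp]
theorem lpInftyRe_apply {G : Type*} (f : lp (fun _ : G => ℂ) ∞) (h : G) :
    lpInftyRe G f h = (f h).re := rfl

/-- A mean on bounded functions is bounded by the supremum norm. -/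
theorem abs_mean_le_norm {G : Type*} {m : lp (fun _ : G => ℝ) ∞ →ₗ[ℝ] ℝ} (hone : m 1 = 1)
    (hpos : ∀ f, (∀ h : G, 0 ≤ f h) → 0 ≤ m f) (f : lp (fun _ : G => ℝ) ∞) : |m f| ≤ ‖f‖ := by
  have hf (h : G) : |f h| ≤ ‖f‖ := lp.norm_apply_le_norm ENNReal.top_ne_zero f h
  have hupper := hpos (‖f‖ • 1 - f) fun h => by
    change 0 ≤ ‖f‖ * 1 - f h
    linarith [(abs_le.1 (hf h)).2]
  have hlower := hpos (‖f‖ • 1 + f) fun h => by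
    change 0 ≤ ‖f‖ * 1 + f h
    linarith [(abs_le.1 (hf h)).1]
  simp only [map_sub, map_add, map_smul, hone, smul_eq_mul, mul_one] at hupper hlower
  exact abs_le.2 ⟨by linarith, by linarith⟩

/-- The complex-linear extension of a real functional to bounded complex functions. -/
noncomputable def complexMean {G : Type*} (m : lp (fun _ : G => ℝ) ∞ →ₗ[ℝ] ℝ) :
    lp (fun _ : G => ℂ) ∞ →ₗ[ℂ] ℂ :=
  Module.Dual.extendRCLike (m ∘ₗ lpInftyRe G)

theorem complexMean_re {G : Type*} (m : lp (fun _ : G => ℝ) ∞ →ₗ[ℝ] ℝ)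
    (f : lp (fun _ : G => ℂ) ∞) : (complexMean m f).re = m (lpInftyRe G f) :=
  Module.Dual.re_extendRCLike_apply (𝕜 := ℂ) _ f

theorem complexMean_im {G : Type*} (m : lp (fun _ : G => ℝ) ∞ →ₗ[ℝ] ℝ)
    (f : lp (fun _ : G => ℂ) ∞) :
    (complexMean m f).im = -m (lpInftyRe G (Complex.I • f)) :=
  Module.Dual.im_extendRCLike_apply (𝕜 := ℂ) _ f

theorem norm_complexMean_le {G : Type*} {m : lp (fun _ : G => ℝ) ∞ →ₗ[ℝ] ℝ} (hone : m 1 = 1)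
    (hpos : ∀ f, (∀ h : G, 0 ≤ f h) → 0 ≤ m f) (f : lp (fun _ : G => ℂ) ∞) :
    ‖complexMean m f‖ ≤ 2 * ‖f‖ := by
  have hre (f : lp (fun _ : G => ℂ) ∞) : ‖lpInftyRe G f‖ ≤ ‖f‖ :=
    lp.norm_le_of_forall_le (norm_nonneg f) fun h =>
      (Complex.abs_re_le_norm _).trans (lp.norm_apply_le_norm ENNReal.top_ne_zero f h)
  have hI : ‖Complex.I • f‖ = ‖f‖ := by simp [norm_smul]
  refine (Complex.norm_le_abs_re_add_abs_im _).trans ?_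
  rw [complexMean_re, complexMean_im, abs_neg, two_mul]
  refine add_le_add ((abs_mean_le_norm hone hpos _).trans (hre f)) ?_
  exact ((abs_mean_le_norm hone hpos _).trans (hre _)).trans hI.le

section Coefficient

variable {G : Type*} [Group G] {E : Type*} [NormedAddCommGroup E] [InnerProductSpace ℂ E]
  {π : G →* (E ≃L[ℂ] E)} {C : ℝ}

theorem norm_inner_rep_le (hC : ∀ g, ‖(π g : E →L[ℂ] E)‖ ≤ C) (x y : E) (h : G) :
    ‖inner ℂ (π h x) (π h y)‖ ≤ C ^ 2 * ‖x‖ * ‖y‖ := by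
  have hle (z : E) : ‖π h z‖ ≤ C * ‖z‖ := (π h : E →L[ℂ] E).le_of_opNorm_le (hC h) z
  calc ‖inner ℂ (π h x) (π h y)‖ ≤ ‖π h x‖ * ‖π h y‖ := norm_inner_le_norm _ _
    _ ≤ (C * ‖x‖) * (C * ‖y‖) :=
      mul_le_mul (hle x) (hle y) (norm_nonneg _) ((norm_nonneg _).trans (hle x))
    _ = C ^ 2 * ‖x‖ * ‖y‖ := by ring

/-- The bounded function `h ↦ ⟪π(h⁻¹) x, π(h⁻¹) y⟫` of a uniformly bounded representation. -/
noncomputable def orbitInner (hC : ∀ g, ‖(π g : E →L[ℂ] E)‖ ≤ C) (x y : E) :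
    lp (fun _ : G => ℂ) ∞ :=
  ⟨fun h => inner ℂ (π h⁻¹ x) (π h⁻¹ y), memℓp_infty ⟨C ^ 2 * ‖x‖ * ‖y‖, by
    rintro _ ⟨h, rfl⟩
    exact norm_inner_rep_le hC x y h⁻¹⟩⟩

@[simp]
theorem orbitInner_apply (hC : ∀ g, ‖(π g : E →L[ℂ] E)‖ ≤ C) (x y : E) (h : G) :
    orbitInner hC x y h = inner ℂ (π h⁻¹ x) (π h⁻¹ y) := rfl

/-- The average over the group of the pullbacks of the inner product, as a bounded sesquilinear
form. -/
noncomputable def averagedInner (hC : ∀ g, ‖(π g : E →L[ℂ] E)‖ ≤ C)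
    {m : lp (fun _ : G => ℝ) ∞ →ₗ[ℝ] ℝ} (hone : m 1 = 1)
    (hpos : ∀ f, (∀ h : G, 0 ≤ f h) → 0 ≤ m f) : E →L⋆[ℂ] E →L[ℂ] ℂ :=
  LinearMap.mkContinuous₂
    (LinearMap.mk₂'ₛₗ (starRingEnd ℂ) (RingHom.id ℂ)
      (fun x y => complexMean m (orbitInner hC x y))
      (fun x x' y => by
        rw [← map_add]; congr 1; ext h; simp)
      (fun c x y => by
        rw [← map_smul]; congr 1; ext h; simp [mul_comm])
      (fun x y y' => by
        rw [← map_add]; congr 1; ext h; simp)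
      (fun c x y => by
        rw [← map_smul]; congr 1; ext h; simp))
    (2 * C ^ 2) fun x y => by
      refine (norm_complexMean_le hone hpos _).trans ?_
      rw [mul_assoc, mul_assoc, ← mul_assoc (C ^ 2)]
      gcongr
      exact lp.norm_le_of_forall_le (by positivity) fun h => norm_inner_rep_le hC x y h⁻¹

theorem averagedInner_apply (hC : ∀ g, ‖(π g : E →L[ℂ] E)‖ ≤ C)
    {m : lp (fun _ : G => ℝ) ∞ →ₗ[ℝ] ℝ} (hone : m 1 = 1)
    (hpos : ∀ f, (∀ h : G, 0 ≤ f h) → 0 ≤ m f) (x y : E) :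
    averagedInner hC hone hpos x y = complexMean m (orbitInner hC x y) := rfl

theorem averagedInner_self_im (hC : ∀ g, ‖(π g : E →L[ℂ] E)‖ ≤ C)
    {m : lp (fun _ : G => ℝ) ∞ →ₗ[ℝ] ℝ} (hone : m 1 = 1)
    (hpos : ∀ f, (∀ h : G, 0 ≤ f h) → 0 ≤ m f) (x : E) :
    (averagedInner hC hone hpos x x).im = 0 := by
  have hzero : lpInftyRe G (Complex.I • orbitInner hC x x) = 0 := by
    ext h
    simpa using inner_self_im (𝕜 := ℂ) (π h⁻¹ x)
  rw [averagedInner_apply, complexMean_im, hzero, map_zero, neg_zero]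

theorem norm_sq_le_averagedInner_self (hC : ∀ g, ‖(π g : E →L[ℂ] E)‖ ≤ C)
    {m : lp (fun _ : G => ℝ) ∞ →ₗ[ℝ] ℝ} (hone : m 1 = 1)
    (hpos : ∀ f, (∀ h : G, 0 ≤ f h) → 0 ≤ m f) (hC0 : 0 < C) (x : E) :
    (C ^ 2)⁻¹ * ‖x‖ ^ 2 ≤ (averagedInner hC hone hpos x x).re := by
  have hlower := hpos (lpInftyRe G (orbitInner hC x x) - ((C ^ 2)⁻¹ * ‖x‖ ^ 2) • 1) fun h => by
    have hx : ‖x‖ ≤ C * ‖π h⁻¹ x‖ := by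
      have hcancel : π h (π h⁻¹ x) = x := by
        change (π h * π h⁻¹) x = x
        rw [← map_mul, mul_inv_cancel, map_one]
        rfl
      simpa [-map_inv, hcancel] using (π h : E →L[ℂ] E).le_of_opNorm_le (hC h) (π h⁻¹ x)
    have hinner : (inner ℂ (π h⁻¹ x) (π h⁻¹ x)).re = ‖π h⁻¹ x‖ ^ 2 :=
      inner_self_eq_norm_sq (𝕜 := ℂ) _
    have hsq : (C ^ 2)⁻¹ * ‖x‖ ^ 2 ≤ ‖π h⁻¹ x‖ ^ 2 := by
      rw [inv_mul_le_iff₀ (by positivity), ← mul_pow]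
      gcongr
    change 0 ≤ (inner ℂ (π h⁻¹ x) (π h⁻¹ x)).re - (C ^ 2)⁻¹ * ‖x‖ ^ 2 * 1
    linarith
  rw [map_sub, map_smul, hone, smul_eq_mul, mul_one, sub_nonneg] at hlower
  rwa [averagedInner_apply, complexMean_re]

theorem averagedInner_self_rep (hC : ∀ g, ‖(π g : E →L[ℂ] E)‖ ≤ C)
    {m : lp (fun _ : G => ℝ) ∞ →ₗ[ℝ] ℝ} (hone : m 1 = 1)
    (hpos : ∀ f, (∀ h : G, 0 ≤ f h) → 0 ≤ m f)
    (hinv : ∀ (g : G) f, m (leftTranslate g f) = m f) (g : G) (x : E) :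
    (averagedInner hC hone hpos (π g x) (π g x)).re = (averagedInner hC hone hpos x x).re := by
  have htrans : lpInftyRe G (orbitInner hC (π g x) (π g x))
      = leftTranslate g (lpInftyRe G (orbitInner hC x x)) := by
    ext h
    change (inner ℂ (π h⁻¹ (π g x)) (π h⁻¹ (π g x))).re
      = (inner ℂ (π (g⁻¹ * h)⁻¹ x) (π (g⁻¹ * h)⁻¹ x)).re
    rw [mul_inv_rev, inv_inv, map_mul]
    rfl
  rw [averagedInner_apply, averagedInner_apply, complexMean_re, complexMean_re, htrans, hinv]

end Coefficient

/-- (Day–Dixmier) Every amenable group is unitarizable. -/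
theorem unitarizable_of_amenable {G : Type*} [Group G] (hG : IsAmenable G) :
    Unitarizable G := by
  obtain ⟨m, hone, hpos, hinv⟩ := hG
  intro E _ _ _ π ⟨C₀, hC₀⟩
  have hC (g : G) : ‖(π g : E →L[ℂ] E)‖ ≤ max C₀ 1 := (hC₀ g).trans (le_max_left _ _)
  have hC_pos : 0 < max C₀ 1 := zero_lt_one.trans_le (le_max_right _ _)
  let B := averagedInner hC hone hpos
  have hB (x : E) : inner ℂ (InnerProductSpace.continuousLinearMapOfBilin B x) x = B x x :=
    InnerProductSpace.continuousLinearMapOfBilin_apply B x x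
  obtain ⟨T, hT⟩ := exists_continuousLinearEquiv_norm_sq_eq
    (InnerProductSpace.continuousLinearMapOfBilin B)
    (fun x => by rw [hB]; exact averagedInner_self_im hC hone hpos x)
    (inv_pos.2 (pow_pos hC_pos 2))
    (fun x => by rw [hB]; exact norm_sq_le_averagedInner_self hC hone hpos hC_pos x)
  refine ⟨T.symm, fun g v => ?_⟩
  rw [← sq_eq_sq₀ (norm_nonneg _) (norm_nonneg _), ContinuousLinearEquiv.symm_symm, hT, hB]
  calc (B (π g (T.symm v)) (π g (T.symm v))).re = (B (T.symm v) (T.symm v)).re :=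
        averagedInner_self_rep hC hone hpos hinv g _
    _ = ‖v‖ ^ 2 := by rw [← hB, ← hT, T.apply_symm_apply]
end

section
/- The free group on two generators is not unitarizable: there exists a uniformly bounded representation of the free group F₂ on a complex Hilbert space that is not unitarizable. -/
namespace FreeGroup

section Parent

variable {α : Type*} [DecidableEq α]

/-- Delete the last letter of the reduced word of an element: in the Cayley tree, step from a vertex
towards the root `1` (with `parent 1 = 1`). -/
def parent (x : FreeGroup α) : FreeGroup α := mk x.toWord.dropLast

theorem norm_parent (x : FreeGroup α) : norm (parent x) = norm x - 1 := by
  have h : IsReduced x.toWord.dropLast :=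
    isReduced_toWord.infix (List.dropLast_prefix _).isInfix
  simp [norm, parent, h.reduce_eq]

theorem norm_eq_of_parent_eq {x y : FreeGroup α} (hx : x ≠ 1) (hy : y ≠ 1)
    (h : parent x = parent y) : norm x = norm y := by
  have h' := congrArg norm h
  rw [norm_parent, norm_parent] at h'
  have hx' := mt norm_eq_zero.1 hx
  have hy' := mt norm_eq_zero.1 hy
  omega

theorem parent_inv_of (a : α) : parent (of a)⁻¹ = 1 := by
  simp [parent, toWord_inv, invRev, one_eq_mk]

theorem parent_map (τ : Equiv.Perm α) (x : FreeGroup α) :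
    parent (map τ x) = map τ (parent x) := by
  have h : (map τ x).toWord = x.toWord.map fun s => (τ s.1, s.2) := by
    conv_lhs => rw [← mk_toWord (x := x), map.mk, toWord_mk]
    apply IsReduced.reduce_eq
    rw [IsReduced, List.isChain_map]
    exact (isReduced_toWord (x := x)).imp fun a b hab h => hab (τ.injective h)
  simp [parent, h, List.map_dropLast]

theorem parent_letter_mul (s : α × Bool) (x : FreeGroup α) (hx : x ≠ 1) (hsx : mk [s] * x ≠ 1) :
    parent (mk [s] * x) = mk [s] * parent x := by
  obtain ⟨c, L, hL⟩ := List.exists_cons_of_ne_nil (mt toWord_eq_nil_iff.1 hx)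
  have hred : reduce (c :: L) = c :: L := by rw [← hL, reduce_toWord]
  have hw : (mk [s] * x).toWord = if s.1 = c.1 ∧ s.2 = !c.2 then L else s :: c :: L := by
    rw [toWord_mul, toWord_mk, reduce_singleton, hL, List.singleton_append, reduce.cons, hred]
  have hne : (mk [s] * x).toWord ≠ [] := mt toWord_eq_nil_iff.1 hsx
  rw [parent, parent, hL, hw, mul_mk]
  rw [hw] at hne
  split_ifs with h
  · rw [if_pos h] at hne
    obtain ⟨a, b⟩ := s
    obtain ⟨a', b'⟩ := c
    obtain ⟨rfl, rfl⟩ : a = a' ∧ b = !b' := h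
    rw [List.dropLast_cons_of_ne_nil hne]
    exact (Quot.sound Red.Step.cons_not_rev).symm
  · simp

/-- The inverses of the suffixes of the reduced word of `w`: the vertices of the geodesic from `1`
to `w⁻¹`. -/
def invSuffixes (w : FreeGroup α) : Finset (FreeGroup α) :=
  w.toWord.tails.toFinset.image fun u => (mk u)⁻¹

theorem mem_invSuffixes {w x : FreeGroup α} :
    x ∈ invSuffixes w ↔ ∃ u, u <:+ w.toWord ∧ (mk u)⁻¹ = x := by
  simp [invSuffixes]

theorem parent_mk_mul (V : List (α × Bool)) (x : FreeGroup α)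
    (hx : ∀ u, u <:+ V → mk u * x ≠ 1) : parent (mk V * x) = mk V * parent x := by
  induction V with
  | nil => simp [← one_eq_mk]
  | cons s V ih =>
    have hs : (mk (s :: V) : FreeGroup α) = mk [s] * mk V := by simp
    have h₁ := hx _ List.suffix_rfl
    rw [hs, mul_assoc] at h₁ ⊢
    rw [parent_letter_mul s _ (hx _ (List.suffix_cons s V)) h₁,
      ih fun u hu => hx u (hu.trans (List.suffix_cons s V)), mul_assoc]

theorem parent_mul_of_notMem_invSuffixes {w x : FreeGroup α} (hx : x ∉ invSuffixes w) :
    x ≠ 1 ∧ w * x ≠ 1 ∧ parent (w * x) = w * parent x := by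
  have h : ∀ u, u <:+ w.toWord → mk u * x ≠ 1 := fun u hu h =>
    hx (mem_invSuffixes.2 ⟨u, hu, (eq_inv_of_mul_eq_one_right h).symm⟩)
  refine ⟨?_, ?_, ?_⟩
  · simpa [← one_eq_mk] using h [] List.nil_suffix
  · simpa [mk_toWord] using h _ List.suffix_rfl
  · simpa [mk_toWord] using parent_mk_mul _ _ h

theorem eq_of_norm_eq {w x y : FreeGroup α} (hx : x ∈ invSuffixes w) (hy : y ∈ invSuffixes w)
    (h : norm x = norm y) : x = y := by
  obtain ⟨u, hu, rfl⟩ := mem_invSuffixes.1 hx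
  obtain ⟨v, hv, rfl⟩ := mem_invSuffixes.1 hy
  rw [norm_inv_eq, norm_inv_eq, norm, norm, toWord_mk, toWord_mk,
    (isReduced_toWord.infix hu.isInfix).reduce_eq,
    (isReduced_toWord.infix hv.isInfix).reduce_eq] at h
  rw [(List.suffix_of_suffix_length_le hu hv h.le).eq_of_length h]

theorem norm_mul_add_norm {w x : FreeGroup α} (hx : x ∈ invSuffixes w) :
    norm (w * x) + norm x = norm w := by
  obtain ⟨u, ⟨v, hv⟩, rfl⟩ := mem_invSuffixes.1 hx
  have hw : w = mk v * mk u := by rw [mul_mk, hv, mk_toWord]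
  have hu : reduce u = u := (isReduced_toWord.infix ⟨v, [], by simpa using hv⟩).reduce_eq
  have hv' : reduce v = v := (isReduced_toWord.infix ⟨[], u, by simpa using hv⟩).reduce_eq
  have h₁ : norm w = v.length + u.length := by rw [norm, ← hv, List.length_append]
  rw [h₁, norm_inv_eq]
  conv_lhs => rw [hw, mul_inv_cancel_right]
  simp [norm, hu, hv']

theorem injOn_parent (w : FreeGroup α) :
    Set.InjOn (parent : FreeGroup α → FreeGroup α)
      ((invSuffixes w).filter (· ≠ 1) : Finset (FreeGroup α)) := by
  intro x hx y hy h
  simp only [Finset.coe_filter, Set.mem_ofPred_eq] at hx hy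
  exact eq_of_norm_eq hx.1 hy.1 (norm_eq_of_parent_eq hx.2 hy.2 h)

theorem injOn_parent_mul (w : FreeGroup α) : Set.InjOn (fun x => parent (w * x))
    ((invSuffixes w).filter (w * · ≠ 1) : Finset (FreeGroup α)) := by
  intro x hx y hy h
  simp only [Finset.coe_filter, Set.mem_ofPred_eq] at hx hy
  have h₁ := norm_mul_add_norm hx.1
  have h₂ := norm_mul_add_norm hy.1
  have h₃ := norm_eq_of_parent_eq hx.2 hy.2 h
  exact eq_of_norm_eq hx.1 hy.1 (by omega)

end Parent

open Sum ContinuousLinearMap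

theorem _root_.Orthonormal.norm_sum_inner_smul_le {κ ι E : Type*} [NormedAddCommGroup E]
    [InnerProductSpace ℂ E] {u : κ → E} (hu : Orthonormal ℂ u) {v : ι → E} (hv : Orthonormal ℂ v)
    (S : Finset κ) (q : κ → ι) (hq : Set.InjOn q S) (f : E) :
    ‖∑ x ∈ S, inner ℂ (u x) f • v (q x)‖ ≤ ‖f‖ := by
  have hv' : Orthonormal ℂ fun x : S => v (q x) :=
    hv.comp (fun x : S => q x) fun x y h => Subtype.ext (hq x.2 y.2 h)
  rw [← Finset.sum_coe_sort S fun x => inner ℂ (u x) f • v (q x)]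
  refine le_of_sq_le_sq ?_ (norm_nonneg _)
  have key := hv'.inner_sum (fun x : S => inner ℂ (u x) f) (fun x : S => inner ℂ (u x) f)
    Finset.univ
  rw [inner_self_eq_norm_sq_to_K] at key
  have h : ‖∑ x : S, inner ℂ (u x) f • v (q x)‖ ^ 2 = ∑ x : S, ‖inner ℂ (u x) f‖ ^ 2 := by
    simp only [RCLike.conj_mul] at key
    exact_mod_cast key
  rw [h, Finset.sum_coe_sort S fun x => ‖inner ℂ (u x) f‖ ^ 2]
  exact hu.sum_inner_products_le f

/-- Inner products with an orthonormal sequence tend to zero. -/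
theorem _root_.Orthonormal.tendsto_inner_zero {E : Type*} [NormedAddCommGroup E]
    [InnerProductSpace ℂ E] {v : ℕ → E} (hv : Orthonormal ℂ v) (x : E) :
    Filter.Tendsto (fun n => inner ℂ (v n) x) Filter.atTop (nhds 0) := by
  rw [tendsto_zero_iff_norm_tendsto_zero]
  have h := (hv.inner_products_summable (x := x)).tendsto_atTop_zero.sqrt
  simpa using h

/-- The vector of the standard orthonormal basis of `ℓ²(ι)` at `y`. -/
noncomputable def basisVec {ι : Type*} [DecidableEq ι] (y : ι) : lp (fun _ : ι => ℂ) 2 :=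
  lp.single 2 y 1

section BasisVec

variable {ι : Type*} [DecidableEq ι]

theorem orthonormal_basisVec : Orthonormal ℂ (basisVec : ι → lp (fun _ : ι => ℂ) 2) := by
  rw [orthonormal_iff_ite]
  intro i j
  rw [basisVec, basisVec, lp.inner_single_left, lp.single_apply]
  by_cases h : i = j
  · subst h; simp
  · simp [h]

theorem clm_ext_basisVec {F : Type*} [AddCommMonoid F] [Module ℂ F] [TopologicalSpace F]
    [T2Space F] {f g : lp (fun _ : ι => ℂ) 2 →L[ℂ] F}
    (h : ∀ y, f (basisVec y) = g (basisVec y)) : f = g := by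
  refine lp.ext_continuousLinearMap (by simp) fun i => ?_
  ext
  exact h i

/-- The isometry of `ℓ²(ι)` that permutes the standard basis along an injective map. -/
noncomputable def permIsometry (σ : ι → ι) (hσ : σ.Injective) :
    lp (fun _ : ι => ℂ) 2 →ₗᵢ[ℂ] lp (fun _ : ι => ℂ) 2 :=
  (orthonormal_basisVec.comp σ hσ).orthogonalFamily.linearIsometry

@[simp]
theorem permIsometry_basisVec (σ : ι → ι) (hσ : σ.Injective) (y : ι) :
    permIsometry σ hσ (basisVec y) = basisVec (σ y) := by
  rw [permIsometry, basisVec, OrthogonalFamily.linearIsometry_apply_single]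
  simp [basisVec]

theorem norm_permIsometry_le (σ : ι → ι) (hσ : σ.Injective) :
    ‖(permIsometry σ hσ).toContinuousLinearMap‖ ≤ 1 :=
  LinearIsometry.norm_toContinuousLinearMap_le _

end BasisVec

theorem map_perm_injective {α : Type*} (τ : Equiv.Perm α) : Function.Injective (FreeGroup.map τ) :=
  (freeGroupCongr τ).injective

section Rep

variable {α : Type*} [DecidableEq α]

/-- Two orthogonal copies of `ℓ²` of the free group. -/
abbrev DoubleEllTwo (α : Type*) : Type _ := lp (fun _ : FreeGroup α ⊕ FreeGroup α => ℂ) 2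

/-- The commutator of left translation by `w` with the linear extension of `parent` (sending `1`
to `0`), evaluated at the basis vector `x` and placed in the first copy. -/
noncomputable def commVec (w x : FreeGroup α) : DoubleEllTwo α :=
  (if x = 1 then 0 else basisVec (inl (w * parent x))) -
    (if w * x = 1 then 0 else basisVec (inl (parent (w * x))))

theorem commVec_eq_zero {w x : FreeGroup α} (hx : x ∉ invSuffixes w) : commVec w x = 0 := by
  obtain ⟨h₁, h₂, h₃⟩ := parent_mul_of_notMem_invSuffixes hx
  simp [commVec, h₁, h₂, h₃]

/-- The bounded derivation of the free group with values in operators from the second copy of `ℓ²`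
to the first one. -/
noncomputable def commOp (w : FreeGroup α) : DoubleEllTwo α →L[ℂ] DoubleEllTwo α :=
  ∑ x ∈ invSuffixes w, (innerSL ℂ (basisVec (inr x))).smulRight (commVec w x)

theorem commOp_apply (w : FreeGroup α) (f : DoubleEllTwo α) :
    commOp w f = ∑ x ∈ invSuffixes w, inner ℂ (basisVec (inr x)) f • commVec w x := by
  simp [commOp]

theorem commOp_inl (w x : FreeGroup α) : commOp w (basisVec (inl x)) = 0 := by
  rw [commOp_apply]
  refine Finset.sum_eq_zero fun y _ => ?_
  simp [orthonormal_iff_ite.1 orthonormal_basisVec]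

theorem commOp_inr (w x : FreeGroup α) : commOp w (basisVec (inr x)) = commVec w x := by
  rw [commOp_apply]
  simp only [orthonormal_iff_ite.1 orthonormal_basisVec, inr.injEq, ite_smul, one_smul, zero_smul,
    Finset.sum_ite_eq']
  split_ifs with h
  · rfl
  · exact (commVec_eq_zero h).symm

theorem norm_commOp_le (w : FreeGroup α) : ‖commOp w‖ ≤ 2 := by
  refine opNorm_le_bound _ zero_le_two fun f => ?_
  have hu : Orthonormal ℂ fun x : FreeGroup α => (basisVec (inr x) : DoubleEllTwo α) :=
    orthonormal_basisVec.comp _ inr_injective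
  have hv : Orthonormal ℂ fun x : FreeGroup α => (basisVec (inl x) : DoubleEllTwo α) :=
    orthonormal_basisVec.comp _ inl_injective
  have h₁ := hu.norm_sum_inner_smul_le hv _ _
    ((mul_right_injective w).comp_injOn (injOn_parent w)) f
  have h₂ := hu.norm_sum_inner_smul_le hv _ _ (injOn_parent_mul w) f
  have h : commOp w f =
      ∑ x ∈ (invSuffixes w).filter (· ≠ 1), inner ℂ (basisVec (inr x)) f •
          basisVec (inl (w * parent x)) -
        ∑ x ∈ (invSuffixes w).filter (w * · ≠ 1), inner ℂ (basisVec (inr x)) f •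
          basisVec (inl (parent (w * x))) := by
    rw [commOp_apply, Finset.sum_filter, Finset.sum_filter, ← Finset.sum_sub_distrib]
    refine Finset.sum_congr rfl fun x _ => ?_
    rw [commVec, smul_sub]
    by_cases h₁ : x = 1 <;> by_cases h₂ : w * x = 1 <;> simp [h₁, h₂]
  rw [h]
  refine (norm_sub_le _ _).trans ?_
  rw [two_mul]
  exact add_le_add h₁ h₂

/-- Translation by `w` perturbed by the derivation `commOp`. -/
noncomputable def twistOp (w : FreeGroup α) : DoubleEllTwo α →L[ℂ] DoubleEllTwo α :=
  (permIsometry (Sum.map (w * ·) (w * ·))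
    ((mul_right_injective w).sumMap (mul_right_injective w))).toContinuousLinearMap + commOp w

theorem twistOp_inl (w x : FreeGroup α) :
    twistOp w (basisVec (inl x)) = basisVec (inl (w * x)) := by
  simp [twistOp, commOp_inl]

theorem twistOp_inr (w x : FreeGroup α) :
    twistOp w (basisVec (inr x)) = basisVec (inr (w * x)) + commVec w x := by
  simp [twistOp, commOp_inr]

theorem norm_twistOp_le (w : FreeGroup α) : ‖twistOp w‖ ≤ 3 := by
  refine (norm_add_le _ _).trans ?_
  have h := norm_commOp_le w
  have h' := norm_permIsometry_le (Sum.map (w * ·) (w * ·))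
    ((mul_right_injective w).sumMap (mul_right_injective w))
  linarith

theorem commVec_mul (w v x : FreeGroup α) :
    commVec (w * v) x = commVec w (v * x) + twistOp w (commVec v x) := by
  simp only [commVec, map_sub, apply_ite (twistOp w), twistOp_inl, map_zero, mul_assoc]
  abel

/-- The uniformly bounded representation of the free group given by a block triangular matrix. -/
noncomputable def twistHom : FreeGroup α →* (DoubleEllTwo α →L[ℂ] DoubleEllTwo α) where
  toFun := twistOp
  map_one' := clm_ext_basisVec fun y => by
    cases y <;> simp [twistOp_inl, twistOp_inr, commVec]
  map_mul' w v := clm_ext_basisVec fun y => by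
    cases y <;> simp [twistOp_inl, twistOp_inr, mul_assoc, commVec_mul, add_assoc]

/-- The unitary operator that permutes the letters. -/
noncomputable def letterPermOp (τ : Equiv.Perm α) : DoubleEllTwo α →L[ℂ] DoubleEllTwo α :=
  (permIsometry (Sum.map (FreeGroup.map τ) (FreeGroup.map τ))
    ((map_perm_injective τ).sumMap (map_perm_injective τ))).toContinuousLinearMap

theorem letterPermOp_basisVec (τ : Equiv.Perm α) (y : FreeGroup α ⊕ FreeGroup α) :
    letterPermOp τ (basisVec y) = basisVec (Sum.map (FreeGroup.map τ) (FreeGroup.map τ) y) := by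
  simp [letterPermOp]

/-- The unitary representation of the permutations of the letters. -/
noncomputable def letterPermHom : Equiv.Perm α →* (DoubleEllTwo α →L[ℂ] DoubleEllTwo α) where
  toFun := letterPermOp
  map_one' := clm_ext_basisVec fun y => by
    rw [letterPermOp_basisVec]
    cases y <;> simp
  map_mul' σ τ := clm_ext_basisVec fun y => by
    rw [mul_apply_eq_comp]
    simp only [letterPermOp_basisVec]
    cases y <;> simp [FreeGroup.map.comp]

theorem letterPermOp_commVec (τ : Equiv.Perm α) (w x : FreeGroup α) :
    letterPermOp τ (commVec w x) = commVec (FreeGroup.map τ w) (FreeGroup.map τ x) := by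
  have h (y : FreeGroup α) : FreeGroup.map τ y = 1 ↔ y = 1 :=
    map_eq_one_iff _ (map_perm_injective τ)
  simp only [commVec, map_sub, apply_ite (letterPermOp τ), letterPermOp_basisVec, map_zero,
    ← _root_.map_mul, h, parent_map, Sum.map_inl]

theorem letterPermOp_mul_twistOp (τ : Equiv.Perm α) (w : FreeGroup α) :
    letterPermOp τ * twistOp w = twistOp (FreeGroup.map τ w) * letterPermOp τ :=
  clm_ext_basisVec fun y => by
    cases y <;> simp [twistOp_inl, twistOp_inr, letterPermOp_basisVec, letterPermOp_commVec]

/-- Permutations of the letters acting by automorphisms of the free group. -/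
def letterPermAut : Equiv.Perm α →* MulAut (FreeGroup α) where
  toFun := freeGroupCongr
  map_one' := freeGroupCongr_refl
  map_mul' σ τ := (freeGroupCongr_trans τ σ).symm

/-- The representation of the semidirect product combining `twistHom` and `letterPermHom`. -/
noncomputable def semidirectHom :
    FreeGroup α ⋊[letterPermAut] Equiv.Perm α →* (DoubleEllTwo α →L[ℂ] DoubleEllTwo α)ˣ :=
  SemidirectProduct.lift twistHom.toHomUnits letterPermHom.toHomUnits fun τ => by
    refine MonoidHom.ext fun w => ?_
    simp only [MonoidHom.comp_apply, MulEquiv.coe_toMonoidHom, MulAut.conj_apply]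
    rw [eq_mul_inv_iff_mul_eq]
    exact Units.ext (letterPermOp_mul_twistOp τ w).symm

theorem norm_semidirectHom_le (g : FreeGroup α ⋊[letterPermAut] Equiv.Perm α) :
    ‖(semidirectHom g : DoubleEllTwo α →L[ℂ] DoubleEllTwo α)‖ ≤ 3 := by
  have h : (semidirectHom g : DoubleEllTwo α →L[ℂ] DoubleEllTwo α) =
      twistOp g.left * letterPermOp g.right := rfl
  have h₁ := norm_twistOp_le g.left
  have h₂ : ‖letterPermOp g.right‖ ≤ 1 := norm_permIsometry_le _ _
  rw [h]
  calc _ ≤ ‖twistOp g.left‖ * ‖letterPermOp g.right‖ := _root_.norm_mul_le _ _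
    _ ≤ 3 * 1 := by gcongr
    _ = 3 := mul_one 3

end Rep

/-- The homomorphism from the free group on two generators to the semidirect product sending the
generators to a letter and to the shift of the letters. -/
def toSemidirect : FreeGroup (Fin 2) →* FreeGroup ℤ ⋊[letterPermAut] Equiv.Perm ℤ :=
  lift ![SemidirectProduct.inl (of 0), SemidirectProduct.inr (Equiv.addRight 1)]

theorem exists_toSemidirect_eq (n : ℕ) :
    ∃ g, toSemidirect g = SemidirectProduct.inl (of (n : ℤ)) := by
  refine ⟨of 1 ^ n * of 0 * (of 1 ^ n)⁻¹, ?_⟩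
  have h (m : ℕ) : (Equiv.addRight (1 : ℤ) ^ m : Equiv.Perm ℤ) 0 = m := by simp
  have h' : letterPermAut (Equiv.addRight (1 : ℤ) ^ n) (of 0) = of (n : ℤ) := by
    rw [← h n]
    exact map.of
  rw [← h', SemidirectProduct.inl_aut]
  simp only [toSemidirect, _root_.map_mul, _root_.map_inv, _root_.map_pow, lift_apply_of,
    Matrix.cons_val_zero, Matrix.cons_val_one]

/-- A uniformly bounded representation of the free group on two generators. -/
noncomputable def boundedRep : FreeGroup (Fin 2) →* (DoubleEllTwo ℤ ≃L[ℂ] DoubleEllTwo ℤ) :=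
  (ContinuousLinearEquiv.unitsEquiv ℂ (DoubleEllTwo ℤ)).toMonoidHom.comp
    (semidirectHom.comp toSemidirect)

theorem uniformlyBoundedRep_boundedRep : UniformlyBoundedRep boundedRep :=
  ⟨3, fun g => norm_semidirectHom_le (toSemidirect g)⟩

theorem exists_boundedRep_eq (n : ℕ) :
    ∃ g, ∀ f, boundedRep g f = twistOp (of (n : ℤ)) f := by
  obtain ⟨g, hg⟩ := exists_toSemidirect_eq n
  refine ⟨g, fun f => ?_⟩
  have h : boundedRep g f =
      (semidirectHom (toSemidirect g) : DoubleEllTwo ℤ →L[ℂ] DoubleEllTwo ℤ) f := rfl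
  rw [h, hg, semidirectHom, SemidirectProduct.lift_inl]
  rfl

theorem not_isUnitarizableRep_boundedRep : ¬ IsUnitarizableRep boundedRep := by
  rintro ⟨S, hS⟩
  let T : DoubleEllTwo ℤ →L[ℂ] DoubleEllTwo ℤ := S.symm
  -- the twisted operators preserve the inner product pulled back along `T = S⁻¹`
  have hT (n : ℕ) (v w : DoubleEllTwo ℤ) :
      inner ℂ (T (twistOp (of (n : ℤ)) v)) (T (twistOp (of (n : ℤ)) w)) = inner ℂ (T v) (T w) := by
    obtain ⟨g, hg⟩ := exists_boundedRep_eq n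
    let U : DoubleEllTwo ℤ →ₗᵢ[ℂ] DoubleEllTwo ℤ :=
      ⟨(S.symm.toLinearMap ∘ₗ (boundedRep g).toLinearMap ∘ₗ S.toLinearMap), hS g⟩
    have hU (v : DoubleEllTwo ℤ) : U (T v) = T (twistOp (of (n : ℤ)) v) := by
      rw [← hg]
      exact congrArg (fun z => S.symm (boundedRep g z)) (S.apply_symm_apply v)
    rw [← hU, ← hU, U.inner_map_map]
  let a (n : ℕ) : FreeGroup ℤ := of (n : ℤ)
  have ha : Function.Injective a := fun m n h => Nat.cast_injective (of_injective h)
  -- evaluate the invariance at the basis vectors `inr (a n)⁻¹` and `inl 1`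
  have key (n : ℕ) : inner ℂ (T (basisVec (inr (a n)⁻¹))) (T (basisVec (inl 1))) =
      inner ℂ (T (basisVec (inr 1))) (T (basisVec (inl (a n)))) +
        (‖T (basisVec (inl (a n)))‖ : ℂ) ^ 2 := by
    have h₁ : twistOp (a n) (basisVec (inl 1)) = basisVec (inl (a n)) := by simp [twistOp_inl]
    have h₂ : twistOp (a n) (basisVec (inr (a n)⁻¹)) =
        basisVec (inr 1) + basisVec (inl (a n)) := by
      simp [twistOp_inr, commVec, a, parent_inv_of]
    rw [← hT n, h₁, h₂, map_add, inner_add_left, inner_self_eq_norm_sq_to_K (𝕜 := ℂ)]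
    rfl
  have hinl : Orthonormal ℂ fun n => (basisVec (inl (a n)) : DoubleEllTwo ℤ) :=
    orthonormal_basisVec.comp (fun n => inl (a n)) (inl_injective.comp ha)
  have hinr : Orthonormal ℂ fun n => (basisVec (inr (a n)⁻¹) : DoubleEllTwo ℤ) :=
    orthonormal_basisVec.comp (fun n => inr (a n)⁻¹)
      (inr_injective.comp (inv_injective.comp ha))
  have lim₁ := hinr.tendsto_inner_zero (adjoint T (T (basisVec (inl 1))))
  have lim₂ := (hinl.tendsto_inner_zero (adjoint T (T (basisVec (inr 1))))).star
  simp only [adjoint_inner_right] at lim₁ lim₂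
  have lim : Filter.Tendsto (fun n => (‖T (basisVec (inl (a n)))‖ : ℂ) ^ 2) Filter.atTop
      (nhds 0) := by
    have h := lim₁.sub lim₂
    rw [star_zero, sub_zero] at h
    refine h.congr fun n => ?_
    rw [key n, RCLike.star_def, inner_conj_symm, add_sub_cancel_left]
  have lim' := lim.norm.sqrt
  simp only [norm_pow, Complex.norm_real, norm_norm, Real.sqrt_sq (norm_nonneg _), norm_zero,
    Real.sqrt_zero] at lim'
  -- but `T` is bounded below
  have hbelow (n : ℕ) : 1 ≤ ‖(S : DoubleEllTwo ℤ →L[ℂ] DoubleEllTwo ℤ)‖ *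
      ‖T (basisVec (inl (a n)))‖ := by
    have h := (S : DoubleEllTwo ℤ →L[ℂ] DoubleEllTwo ℤ).le_opNorm (T (basisVec (inl (a n))))
    have h' : (S : DoubleEllTwo ℤ →L[ℂ] DoubleEllTwo ℤ) (T (basisVec (inl (a n)))) =
      basisVec (inl (a n)) := S.apply_symm_apply _
    rwa [h', hinl.1 n] at h
  have := ge_of_tendsto' (lim'.const_mul _) hbelow
  norm_num at this

end FreeGroup

/-- The free group on two generators is not unitarizable: it admits a uniformly bounded
representation on a complex Hilbert space that is not unitarizable. -/
theorem freeGroup_two_not_unitarizable :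
    ∃ (E : Type) (_ : NormedAddCommGroup E) (_ : InnerProductSpace ℂ E)
      (_ : CompleteSpace E) (π : FreeGroup (Fin 2) →* (E ≃L[ℂ] E)),
      UniformlyBoundedRep π ∧ ¬ IsUnitarizableRep π :=
  ⟨_, _, _, inferInstance, FreeGroup.boundedRep, FreeGroup.uniformlyBoundedRep_boundedRep,
    FreeGroup.not_isUnitarizableRep_boundedRep⟩
end
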